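/- arXiv:1605.06774 — 3 statements merged into one kernel-verified Lean document; each statement's English description precedes it below -/
import Mathlib

section
/- A positive integer n is an i-congruent number if and only if there exist positive integers x > y with gcd(x, y) = 1 and x + y odd, and a positive integer t, such that either n = (x^2 - y^2)*t with t ≥ x*y, or n = x*y*t with t odd and t ≥ x^2 - y^2. -/
/-!
Splitting the trapezoid into a `d × b` rectangle and a right triangle with legs `e = a - d` and `b`
gives `2 * n = (e + 2 * d) * b`. The triangle is primitive, so Euclid's parametrization makes its
legs `x ^ 2 - y ^ 2` and `2 * x * y` in one of the two orders. If the even leg is the base, then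
`n = (x ^ 2 - y ^ 2) * (x * y + d)`; if it is the height, then
`n = x * y * (x ^ 2 - y ^ 2 + 2 * d)`. As `d ≥ 0` varies, the last factor runs through all `t` above
a bound, respectively all odd such `t`.
-/

/-- A positive integer `n` is an *i-congruent number* if it is the area of a right trapezoid
with integer side lengths: parallel sides `a > d ≥ 0`, height `b`, slant side `c`,
with `gcd b c = 1`. -/
def ICongruent (n : ℕ) : Prop :=
  ∃ a b c d : ℕ, 0 < a ∧ 0 < b ∧ 0 < c ∧ d < a ∧
    2 * n = (a + d) * b ∧ (a - d) ^ 2 + b ^ 2 = c ^ 2 ∧ Nat.gcd b c = 1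

/-- The pairs `(e, b)` of legs, in this order, of primitive integer right triangles. The hypotenuse
is left implicit in `isSquare`. -/
structure IsPrimitiveLegs (e b : ℕ) : Prop where
  left_pos : 0 < e
  right_pos : 0 < b
  coprime : e.Coprime b
  isSquare : IsSquare (e ^ 2 + b ^ 2)

/-- The parameters `(x, y)` in Euclid's formula for primitive Pythagorean triples, with `x` the
larger one. -/
structure IsEuclidPair (x y : ℕ) : Prop where
  pos : 0 < y
  lt : y < x
  coprime : x.Coprime y
  odd_add : Odd (x + y)

theorem IsPrimitiveLegs.symm {e b : ℕ} (h : IsPrimitiveLegs e b) : IsPrimitiveLegs b e :=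
  ⟨h.right_pos, h.left_pos, h.coprime.symm, add_comm (e ^ 2) (b ^ 2) ▸ h.isSquare⟩

theorem coprime_iff_of_pow_add_pow_eq_pow {a b c k : ℕ} (hk : 0 < k)
    (h : a ^ k + b ^ k = c ^ k) : b.Coprime c ↔ a.Coprime b :=
  calc b.Coprime c
    _ ↔ (b ^ k).Coprime (c ^ k) := by
        rw [Nat.coprime_pow_left_iff hk, Nat.coprime_pow_right_iff hk]
    _ ↔ (b ^ k).Coprime (a ^ k) := by rw [← h, Nat.coprime_add_self_right]
    _ ↔ a.Coprime b := by
        rw [Nat.coprime_pow_left_iff hk, Nat.coprime_pow_right_iff hk, Nat.coprime_comm]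

theorem odd_sq_sub_sq {x y : ℕ} (hle : y ≤ x) (hodd : Odd (x + y)) : Odd (x ^ 2 - y ^ 2) := by
  rwa [Nat.odd_sub (Nat.pow_le_pow_left hle 2), Nat.odd_pow_iff two_ne_zero,
    Nat.even_pow' two_ne_zero, ← Nat.odd_add]

theorem IsEuclidPair.isPrimitiveLegs {x y : ℕ} (h : IsEuclidPair x y) :
    IsPrimitiveLegs (x ^ 2 - y ^ 2) (2 * (x * y)) := by
  have hsq : y ^ 2 < x ^ 2 := Nat.pow_lt_pow_left h.lt two_ne_zero
  have hdiff : ((x ^ 2 - y ^ 2 : ℕ) : ℤ) = x ^ 2 - y ^ 2 := by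
    push_cast [Nat.cast_sub hsq.le]
    rfl
  have hprod : ((2 * (x * y) : ℕ) : ℤ) = 2 * x * y := by
    push_cast
    ring
  have hparity : (x : ℤ) % 2 = 0 ∧ (y : ℤ) % 2 = 1 ∨ (x : ℤ) % 2 = 1 ∧ (y : ℤ) % 2 = 0 := by
    have := Nat.odd_iff.mp h.odd_add
    omega
  obtain ⟨htriple, hcoprime⟩ := PythagoreanTriple.coprime_classification.mpr
    ⟨x, y, .inl ⟨hdiff, hprod⟩, .inl rfl, h.coprime, hparity⟩
  refine ⟨Nat.sub_pos_of_lt hsq, ?_, hcoprime, x ^ 2 + y ^ 2, ?_⟩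
  · exact Nat.mul_pos two_pos (Nat.mul_pos (h.pos.trans h.lt) h.pos)
  · rw [sq (x ^ 2 - y ^ 2), sq (2 * (x * y))]
    exact_mod_cast htriple.eq

theorem IsPrimitiveLegs.exists_isEuclidPair {e b : ℕ} (h : IsPrimitiveLegs e b) :
    ∃ x y, IsEuclidPair x y ∧
      (e = x ^ 2 - y ^ 2 ∧ b = 2 * (x * y) ∨ e = 2 * (x * y) ∧ b = x ^ 2 - y ^ 2) := by
  obtain ⟨c, hc⟩ := h.isSquare
  have htriple : PythagoreanTriple (e : ℤ) b c := by
    rw [PythagoreanTriple, ← sq, ← sq]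
    exact_mod_cast hc
  obtain ⟨m, k, hlegs, -, hcoprime, hparity⟩ :=
    PythagoreanTriple.coprime_classification.mp ⟨htriple, h.coprime⟩
  have he : (0 : ℤ) < e := mod_cast h.left_pos
  have hb : (0 : ℤ) < b := mod_cast h.right_pos
  have hlt : k.natAbs < m.natAbs := Int.natAbs_lt_iff_sq_lt.mpr (by omega)
  have hmk : 0 < m * k := by rcases hlegs with ⟨-, hb'⟩ | ⟨he', -⟩ <;> linarith
  have hprod : ((2 * (m.natAbs * k.natAbs) : ℕ) : ℤ) = 2 * m * k := by
    rw [← Int.natAbs_mul, Nat.cast_mul, Int.natAbs_of_nonneg hmk.le, Nat.cast_ofNat, mul_assoc]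
  have hdiff : ((m.natAbs ^ 2 - k.natAbs ^ 2 : ℕ) : ℤ) = m ^ 2 - k ^ 2 := by
    rw [Nat.cast_sub (Nat.pow_le_pow_left hlt.le 2)]
    simp only [Nat.cast_pow, Int.natAbs_sq]
  refine ⟨m.natAbs, k.natAbs, ⟨?_, hlt, hcoprime, ?_⟩, ?_⟩
  · exact Int.natAbs_pos.mpr (right_ne_zero_of_mul hmk.ne')
  · rw [Nat.odd_iff]
    omega
  · rw [← hprod, ← hdiff] at hlegs
    exact_mod_cast hlegs

theorem iCongruent_iff_exists_isPrimitiveLegs {n : ℕ} :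
    ICongruent n ↔ ∃ e b, IsPrimitiveLegs e b ∧ ∃ d, 2 * n = (e + 2 * d) * b := by
  constructor
  · rintro ⟨a, b, c, d, -, hb, -, hda, harea, hslant, hcoprime⟩
    have hlegs : (a - d).Coprime b :=
      (coprime_iff_of_pow_add_pow_eq_pow two_pos hslant).mp hcoprime
    refine ⟨a - d, b, ⟨Nat.sub_pos_of_lt hda, hb, hlegs, c, hslant.trans (sq c)⟩, d, ?_⟩
    rw [harea, show a - d + 2 * d = a + d by omega]
  · rintro ⟨e, b, ⟨he, hb, hcoprime, c, hc⟩, d, harea⟩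
    rw [← sq] at hc
    have hcpos : 0 < c := Nat.pow_pos_iff.mp (hc ▸ Nat.add_pos_left (Nat.pow_pos he) _)
      |>.resolve_right two_ne_zero
    refine ⟨e + d, b, c, d, by omega, hb, hcpos, by omega, ?_, ?_,
      (coprime_iff_of_pow_add_pow_eq_pow two_pos hc).mpr hcoprime⟩
    · rw [harea, two_mul, add_assoc]
    · rw [Nat.add_sub_cancel, hc]

theorem exists_area_eq_of_even_base_iff {n p b : ℕ} :
    (∃ d, 2 * n = (2 * p + 2 * d) * b) ↔ ∃ t, n = b * t ∧ p ≤ t := by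
  simp only [← mul_add, mul_assoc, Nat.mul_right_inj two_ne_zero]
  constructor
  · rintro ⟨d, rfl⟩
    exact ⟨p + d, mul_comm _ _, Nat.le_add_right p d⟩
  · rintro ⟨t, rfl, hpt⟩
    exact ⟨t - p, by rw [Nat.add_sub_cancel' hpt, mul_comm]⟩

theorem exists_area_eq_of_even_height_iff {n p e : ℕ} (he : Odd e) :
    (∃ d, 2 * n = (e + 2 * d) * (2 * p)) ↔ ∃ t, n = p * t ∧ Odd t ∧ e ≤ t := by
  simp only [mul_left_comm _ 2 p, Nat.mul_right_inj two_ne_zero]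
  constructor
  · rintro ⟨d, rfl⟩
    exact ⟨e + 2 * d, mul_comm _ _, he.add_even (even_two_mul d), Nat.le_add_right e _⟩
  · rintro ⟨t, rfl, ht, het⟩
    obtain ⟨d, hd⟩ := even_iff_exists_two_mul.mp (Nat.Odd.sub_odd ht he)
    exact ⟨d, by rw [← hd, Nat.add_sub_cancel' het, mul_comm]⟩

theorem icongruent_iff_param (n : ℕ) (hn : 0 < n) :
    ICongruent n ↔
      ∃ x y t : ℕ, 0 < y ∧ y < x ∧ Nat.gcd x y = 1 ∧ Odd (x + y) ∧ 0 < t ∧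
        ((n = (x ^ 2 - y ^ 2) * t ∧ x * y ≤ t) ∨
         (n = x * y * t ∧ Odd t ∧ x ^ 2 - y ^ 2 ≤ t)) := by
  rw [iCongruent_iff_exists_isPrimitiveLegs]
  constructor
  · rintro ⟨e, b, hlegs, harea⟩
    obtain ⟨x, y, hxy, ⟨rfl, rfl⟩ | ⟨rfl, rfl⟩⟩ := hlegs.exists_isEuclidPair
    · have hleg := odd_sq_sub_sq hxy.lt.le hxy.odd_add
      obtain ⟨t, hfactor, ht, hle⟩ := (exists_area_eq_of_even_height_iff hleg).mp harea
      exact ⟨x, y, t, hxy.pos, hxy.lt, hxy.coprime, hxy.odd_add, ht.pos, .inr ⟨hfactor, ht, hle⟩⟩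
    · obtain ⟨t, hfactor, hle⟩ := exists_area_eq_of_even_base_iff.mp harea
      have ht : 0 < t := (Nat.mul_pos (hxy.pos.trans hxy.lt) hxy.pos).trans_le hle
      exact ⟨x, y, t, hxy.pos, hxy.lt, hxy.coprime, hxy.odd_add, ht, .inl ⟨hfactor, hle⟩⟩
  · rintro ⟨x, y, t, hy, hlt, hcoprime, hodd, -, ⟨hfactor, hle⟩ | ⟨hfactor, ht, hle⟩⟩
    all_goals have hxy : IsEuclidPair x y := ⟨hy, hlt, hcoprime, hodd⟩
    · exact ⟨2 * (x * y), x ^ 2 - y ^ 2, hxy.isPrimitiveLegs.symm,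
        exists_area_eq_of_even_base_iff.mpr ⟨t, hfactor, hle⟩⟩
    · exact ⟨x ^ 2 - y ^ 2, 2 * (x * y), hxy.isPrimitiveLegs,
        (exists_area_eq_of_even_height_iff (odd_sq_sub_sq hlt.le hodd)).mpr ⟨t, hfactor, ht, hle⟩⟩
end

section
/- Let f(x) denote the number of positive integers n ≤ x that are not i-congruent numbers. Then f(x) is asymptotically equal to c*x/log x as x → ∞, where c = 1 + log 2 and log denotes the natural logarithm; that is, f(x) * (log x) / x tends to 1 + log 2 as x → ∞. -/
open scoped Classical in
/-- The number of positive integers `n ≤ x` that are not i-congruent numbers. -/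
noncomputable def nonICongruentCount (x : ℝ) : ℕ :=
  ((Finset.Icc 1 ⌊x⌋₊).filter fun n => ¬ ICongruent n).card

/-!
An odd `n` fails to be i-congruent exactly when it is `1`, a prime, or a product `p * q` of primes
with `p ≤ q` and `4 * q < p ^ 2`, while an even `n = 2 ^ a * m` with `m` odd can only fail if
`m < 4 ^ a`, which happens for `O(x ^ (3 / 4))` numbers up to `x`. The primes contribute
`x / log x`. For the products, `4 * q < p ^ 2` is automatic once `p` exceeds `(4 * x) ^ (1 / 3)`,
and smaller `p` contribute a negligible amount, so their number is asymptotic to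
`∑ π(x / p)` over `x ^ (1 / 3) < p ≤ x ^ (1 / 2)`. Substituting `p = x ^ u`, the prime number
theorem turns this sum into `x / log x` times `∫ du / (u * (1 - u))` over `[1 / 3, 1 / 2]`,
which is `log 2`.

The prime number theorem comes from the nonvanishing of `ζ` on `re s = 1` by way of the
Ingham–Karamata theorem: a bounded slowly decreasing function whose Laplace transform extends
continuously to the closed right half-plane tends to zero, because convolving it with a kernel
whose Fourier transform has compact support reduces the claim to the Riemann–Lebesgue lemma.
-/

section Tauberian

open Set Filter Topology MeasureTheory FourierTransform SchwartzMap

/-- A nonnegative function of integral one that is the Fourier transform of a continuous,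
compactly supported function: an averaging kernel that only sees a bounded range of frequencies. -/
structure BandLimitedDensity (K : ℝ → ℝ) : Prop where
  nonneg : ∀ v, 0 ≤ K v
  integrable : Integrable K
  integral_eq_one : ∫ v, K v = 1
  exists_fourier_eq : ∃ k : ℝ → ℂ, Continuous k ∧ HasCompactSupport k ∧ ∀ v, 𝓕 k v = K v

/-- A real function is slowly decreasing at infinity (Schmidt) if, on short enough windows to the
right, it drops by at most any prescribed positive amount. -/
def SlowlyDecreasing (f : ℝ → ℝ) : Prop :=
  ∀ ε > 0, ∃ δ > 0, ∀ᶠ u in atTop, ∀ v ∈ Icc u (u + δ), f u - ε ≤ f v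

theorem ofReal_re_fourier_of_even {φ : ℝ → ℝ} (hφ : ∀ t, φ (-t) = φ t) (v : ℝ) :
    ((𝓕 (fun t ↦ (φ t : ℂ)) v).re : ℂ) = 𝓕 (fun t ↦ (φ t : ℂ)) v := by
  rw [← Complex.conj_eq_iff_re, Real.fourier_real_eq, ← integral_conj, ← integral_neg_eq_self]
  refine integral_congr_ae (.of_forall fun t ↦ ?_)
  simp [Circle.smul_def, hφ, ← Circle.coe_inv_eq_conj, ← AddChar.map_neg_eq_inv]

theorem bandLimitedDensity_normalize {K : ℝ → ℝ} (hK : ∀ v, 0 ≤ K v) (hK_int : Integrable K)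
    (hK_pos : 0 < ∫ v, K v) {k : ℝ → ℂ} (hk : Continuous k) (hkc : HasCompactSupport k)
    (hkK : ∀ v, 𝓕 k v = K v) : BandLimitedDensity fun v ↦ (∫ w, K w)⁻¹ * K v where
  nonneg v := mul_nonneg (inv_nonneg.2 hK_pos.le) (hK v)
  integrable := hK_int.const_mul _
  integral_eq_one := by rw [integral_const_mul, inv_mul_cancel₀ hK_pos.ne']
  exists_fourier_eq := by
    refine ⟨fun t ↦ ((∫ w, K w)⁻¹ : ℝ) * k t, by fun_prop, hkc.mul_left, fun v ↦ ?_⟩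
    rw [Complex.ofReal_mul, ← hkK, Real.fourier_real_eq, Real.fourier_real_eq,
      ← integral_const_mul]
    simp only [mul_smul_comm]

-- The Fourier transform of the autoconvolution of a real even bump is a square.
theorem exists_bandLimitedDensity_of_even {φ : ℝ → ℝ} (hφ : ContDiff ℝ (⊤ : ℕ∞) φ)
    (hφc : HasCompactSupport φ) (hφ_even : ∀ t, φ (-t) = φ t) (hφ_int : ∫ t, φ t ≠ 0) :
    ∃ K, BandLimitedDensity K := by
  have smooth : ContDiff ℝ (⊤ : ℕ∞) fun t ↦ (φ t : ℂ) := Complex.ofRealCLM.contDiff.comp hφ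
  have support : HasCompactSupport fun t ↦ (φ t : ℂ) := hφc.comp_left Complex.ofReal_zero
  set ψ : 𝓢(ℝ, ℂ) := support.toSchwartzMap smooth
  have ψ_coe : ⇑ψ = fun t ↦ (φ t : ℂ) := rfl
  set F : ℝ → ℝ := fun v ↦ (𝓕 ψ v).re with F_def
  have F_coe (v : ℝ) : (F v : ℂ) = 𝓕 ⇑ψ v := by
    rw [F_def, SchwartzMap.fourier_coe, ψ_coe, ofReal_re_fourier_of_even hφ_even]
  have F_cont : Continuous F := Complex.continuous_re.comp (𝓕 ψ).continuous
  have F_sq_int : Integrable (fun v ↦ F v ^ 2) := ((𝓕 ψ).memLp 2 volume).re.integrable_sq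
  have F_zero : F 0 = ∫ t, φ t := by
    simp [F_def, SchwartzMap.fourier_coe, ψ_coe, Real.fourier_real_eq, integral_complex_ofReal]
  have F_sq_pos : 0 < ∫ v, F v ^ 2 :=
    integral_pos_of_integrable_nonneg_nonzero (x := 0) (by fun_prop) F_sq_int
      (fun v ↦ sq_nonneg _) (by simpa [F_zero] using hφ_int)
  refine ⟨_, bandLimitedDensity_normalize (k := convolution ψ ψ (.mul ℂ ℂ) volume)
    (fun v ↦ sq_nonneg (F v)) F_sq_int F_sq_pos ?_ ?_ fun v ↦ ?_⟩
  · exact support.continuous_convolution_right _ ψ.integrable.locallyIntegrable ψ.continuous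
  · exact support.convolution _ support
  · rw [Real.fourier_mul_convolution_eq ψ.integrable ψ.integrable, ← F_coe, Complex.ofReal_pow, sq]

theorem exists_bandLimitedDensity : ∃ K, BandLimitedDensity K := by
  let b : ContDiffBump (0 : ℝ) := ⟨1, 2, one_pos, one_lt_two⟩
  exact exists_bandLimitedDensity_of_even b.contDiff b.hasCompactSupport b.neg b.integral_pos.ne'

theorem BandLimitedDensity.dilate {K : ℝ → ℝ} (hK : BandLimitedDensity K) {l : ℝ} (hl : 0 < l) :
    BandLimitedDensity fun v ↦ l * K (l * v) where
  nonneg v := mul_nonneg hl.le (hK.nonneg _)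
  integrable := (hK.integrable.comp_mul_left' hl.ne').const_mul l
  integral_eq_one := by
    rw [integral_const_mul, Measure.integral_comp_mul_left, hK.integral_eq_one, abs_of_pos
      (inv_pos.2 hl), smul_eq_mul, mul_one, mul_inv_cancel₀ hl.ne']
  exists_fourier_eq := by
    obtain ⟨k, k_cont, k_supp, hkK⟩ := hK.exists_fourier_eq
    refine ⟨fun t ↦ k (l⁻¹ * t), by fun_prop,
      k_supp.comp_homeomorph (.mulLeft₀ l⁻¹ (inv_ne_zero hl.ne')), fun v ↦ ?_⟩
    have rescale := Measure.integral_comp_mul_left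
      (fun s ↦ Real.fourierChar (-(s * (l * v))) • k s) l⁻¹
    rw [inv_inv, abs_of_pos hl, ← Real.fourier_real_eq, hkK] at rescale
    rw [Real.fourier_real_eq, Complex.ofReal_mul, ← Complex.real_smul, ← rescale]
    refine integral_congr_ae (.of_forall fun t ↦ ?_)
    field_simp

theorem exists_bandLimitedDensity_concentrated {r η : ℝ} (hr : 0 < r) (hη : 0 < η) :
    ∃ K, BandLimitedDensity K ∧ 1 - η ≤ ∫ v in Icc (-r) r, K v := by
  obtain ⟨K, hK⟩ := exists_bandLimitedDensity
  have mass_tendsto : Tendsto (fun l : ℝ ↦ ∫ v in -(l * r)..(l * r), K v) atTop (𝓝 1) := by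
    have h := tendsto_id.atTop_mul_const hr
    exact hK.integral_eq_one ▸
      intervalIntegral_tendsto_integral hK.integrable (tendsto_neg_atTop_atBot.comp h) h
  obtain ⟨l, hl_mass, hl⟩ := ((mass_tendsto.eventually_const_le (by linarith : 1 - η < 1)).and
    (eventually_gt_atTop 0)).exists
  refine ⟨_, hK.dilate hl, ?_⟩
  rwa [integral_Icc_eq_integral_Ioc, ← intervalIntegral.integral_of_le (by linarith),
    intervalIntegral.integral_const_mul, intervalIntegral.mul_integral_comp_mul_left, mul_neg]

theorem BandLimitedDensity.integrable_mul_comp_sub {K g : ℝ → ℝ} (hK : BandLimitedDensity K)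
    {C : ℝ} (hg : Measurable g) (hgC : ∀ u, |g u| ≤ C) (y : ℝ) :
    Integrable fun u ↦ g u * K (u - y) :=
  (hK.integrable.comp_sub_right y).bdd_mul hg.aestronglyMeasurable (.of_forall hgC)

theorem BandLimitedDensity.le_integral_mul_comp_sub {K g : ℝ → ℝ} (hK : BandLimitedDensity K)
    {a C y r : ℝ} (hg : Measurable g) (hgC : ∀ u, |g u| ≤ C) (hr : 0 ≤ r)
    (hag : ∀ u ∈ Icc (y - r) (y + r), a ≤ g u) :
    a ≤ (∫ u, g u * K (u - y)) + 2 * C * (1 - ∫ v in Icc (-r) r, K v) := by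
  have haC : a ≤ C := (hag y ⟨by linarith, by linarith⟩).trans ((le_abs_self _).trans (hgC y))
  have mass_le : ∫ v in Icc (-r) r, K v ≤ 1 :=
    hK.integral_eq_one ▸ setIntegral_le_integral hK.integrable (.of_forall hK.nonneg)
  have pointwise (v : ℝ) :
      (a + C) * (Icc (-r) r).indicator K v - C * K v ≤ g (v + y) * K v := by
    by_cases hv : v ∈ Icc (-r) r
    · have := hag (v + y) ⟨by linarith [hv.1], by linarith [hv.2]⟩
      rw [indicator_of_mem hv]
      linarith [mul_le_mul_of_nonneg_right this (hK.nonneg v)]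
    · rw [indicator_of_notMem hv]
      linarith [mul_le_mul_of_nonneg_right (neg_le_of_abs_le (hgC (v + y))) (hK.nonneg v)]
  have window_int : Integrable fun v ↦ (a + C) * (Icc (-r) r).indicator K v :=
    (hK.integrable.indicator measurableSet_Icc).const_mul _
  have shifted_int : Integrable fun v ↦ g (v + y) * K v := by
    simpa using (hK.integrable_mul_comp_sub hg hgC y).comp_add_right y
  have average_eq : ∫ v, g (v + y) * K v = ∫ u, g u * K (u - y) := by
    simpa using integral_add_right_eq_self (fun u ↦ g u * K (u - y)) y
  have lower : (a + C) * (∫ v in Icc (-r) r, K v) - C ≤ ∫ u, g u * K (u - y) := by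
    have h := integral_mono (window_int.sub (hK.integrable.const_mul C)) shifted_int pointwise
    rw [Pi.sub_def, integral_sub window_int (hK.integrable.const_mul C), integral_const_mul,
      integral_const_mul, integral_indicator measurableSet_Icc, hK.integral_eq_one] at h
    linarith
  nlinarith

theorem tendsto_zero_of_bandLimited_averages {g : ℝ → ℝ} {C : ℝ} (hg : Measurable g)
    (hgC : ∀ u, |g u| ≤ C) (hg_slow : SlowlyDecreasing g)
    (averages : ∀ K, BandLimitedDensity K →
      Tendsto (fun y ↦ ∫ u, g u * K (u - y)) atTop (𝓝 0)) :
    Tendsto g atTop (𝓝 0) := by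
  have hC : 0 ≤ C := (abs_nonneg _).trans (hgC 0)
  rw [Metric.tendsto_nhds]
  intro ε hε
  obtain ⟨δ, hδ, slow⟩ := hg_slow (ε / 4) (by positivity)
  obtain ⟨K, hK, hK_mass⟩ := exists_bandLimitedDensity_concentrated (half_pos hδ)
    (η := ε / (8 * (C + 1))) (by positivity)
  have tail_le : 2 * C * (1 - ∫ v in Icc (-(δ / 2)) (δ / 2), K v) ≤ ε / 4 := by
    calc _ ≤ 2 * C * (ε / (8 * (C + 1))) := by gcongr; linarith
      _ ≤ 2 * (C + 1) * (ε / (8 * (C + 1))) := by gcongr; linarith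
      _ = ε / 4 := by field_simp; norm_num
  have average_small : ∀ᶠ y in atTop, |∫ u, g u * K (u - y)| < ε / 4 := by
    simpa using (averages K hK).eventually (Metric.ball_mem_nhds 0 (by positivity : 0 < ε / 4))
  have upper : ∀ᶠ u in atTop, g u < ε := by
    filter_upwards [slow, (tendsto_atTop_add_const_right _ (δ / 2) tendsto_id).eventually
      average_small]
      with u hu hsmall
    have := hK.le_integral_mul_comp_sub (y := u + δ / 2) hg hgC (half_pos hδ).le
      fun v hv ↦ hu v ⟨by linarith [hv.1], by linarith [hv.2]⟩
    rw [id_def] at hsmall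
    linarith [(abs_lt.1 hsmall).2]
  have lower : ∀ᶠ u in atTop, -ε < g u := by
    filter_upwards [(tendsto_atTop_add_const_right _ (-δ) tendsto_id).eventually_forall_ge_atTop
      slow, (tendsto_atTop_add_const_right _ (-(δ / 2)) tendsto_id).eventually average_small]
      with u hu hsmall
    simp only [id_def] at hu hsmall
    have := hK.le_integral_mul_comp_sub (g := -g) (a := -g u - ε / 4) (y := u + -(δ / 2)) hg.neg
      (by simpa using hgC) (half_pos hδ).le fun v hv ↦ by
        have := hu v (by linarith [hv.1]) u ⟨by linarith [hv.2], by linarith [hv.1]⟩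
        rw [Pi.neg_apply]
        linarith
    simp only [Pi.neg_apply, neg_mul, integral_neg] at this
    linarith [(abs_lt.1 hsmall).1]
  filter_upwards [upper, lower] with u hu_lt hu_gt
  simpa [abs_lt] using ⟨hu_gt, hu_lt⟩

section Laplace

variable {f : ℝ → ℝ} {C : ℝ} {G : ℂ → ℂ}

theorem integrableOn_mul_exp_neg (hf : Measurable f) (hfC : ∀ u, |f u| ≤ C) {σ : ℝ} (hσ : 0 < σ) :
    IntegrableOn (fun u ↦ f u * Real.exp (-σ * u)) (Ioi 0) :=
  (integrableOn_exp_mul_Ioi (neg_neg_of_pos hσ) 0).bdd_mul hf.aestronglyMeasurable (.of_forall hfC)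

theorem integral_mul_exp_neg_mul_fourier_comp_sub (hf : Measurable f) (hfC : ∀ u, |f u| ≤ C)
    (hL : ∀ z : ℂ, 0 < z.re → ∫ u in Ioi (0 : ℝ), (f u : ℂ) * Complex.exp (-z * u) = G z)
    {k : ℝ → ℂ} (hk : Integrable k) {σ : ℝ} (hσ : 0 < σ) (y : ℝ) :
    ∫ u in Ioi 0, ((f u * Real.exp (-σ * u) : ℝ) : ℂ) * 𝓕 k (u - y) =
      𝓕 (fun t ↦ k t * G (σ + 2 * Real.pi * t * Complex.I)) (-y) := by
  set w : ℝ → ℝ := fun u ↦ f u * Real.exp (-σ * u) with w_def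
  have product_int : Integrable (Function.uncurry fun u t : ℝ ↦
      (w u : ℂ) * (Real.fourierChar (-(t * (u - y))) • k t))
      ((volume.restrict (Ioi 0)).prod volume) := by
    have separated_int := (integrableOn_mul_exp_neg hf hfC hσ).ofReal (𝕜 := ℂ) |>.mul_prod hk
    refine (separated_int.bdd_mul (c := 1) (f := fun p : ℝ × ℝ ↦
      (Real.fourierChar (-(p.2 * (p.1 - y))) : ℂ)) ?_ ?_).congr ?_
    · have := Real.continuous_fourierChar
      exact Continuous.aestronglyMeasurable (by fun_prop)
    · exact .of_forall fun p ↦ (Circle.norm_coe _).le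
    · exact .of_forall fun p ↦ by
        simp only [Function.uncurry, w_def, Circle.smul_def, smul_eq_mul,
          RCLike.ofReal_eq_complex_ofReal]
        ring
  have character_split (u t : ℝ) : Complex.exp (-σ * u) * Real.fourierChar (-(t * (u - y))) =
      Real.fourierChar (-(t * -y)) * Complex.exp (-(σ + 2 * Real.pi * t * Complex.I) * u) := by
    rw [Real.fourierChar_apply, Real.fourierChar_apply, ← Complex.exp_add, ← Complex.exp_add]
    congr 1
    push_cast
    ring
  calc
    _ = ∫ u in Ioi 0, ∫ t, (w u : ℂ) * (Real.fourierChar (-(t * (u - y))) • k t) := by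
      simp only [w_def, Real.fourier_real_eq, integral_const_mul]
    _ = ∫ t, ∫ u in Ioi 0, (w u : ℂ) * (Real.fourierChar (-(t * (u - y))) • k t) :=
      integral_integral_swap product_int
    _ = ∫ t, Real.fourierChar (-(t * -y)) • (k t * G (σ + 2 * Real.pi * t * Complex.I)) := by
      refine integral_congr_ae (.of_forall fun t ↦ ?_)
      simp only [Circle.smul_def, smul_eq_mul]
      rw [← hL _ (by simpa using hσ), ← integral_const_mul, ← integral_const_mul]
      refine integral_congr_ae (.of_forall fun u ↦ ?_)
      simp only [w_def]
      push_cast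
      linear_combination (f u * k t : ℂ) * character_split u t
    _ = _ := (Real.fourier_real_eq _ _).symm

theorem tendsto_fourier_mul_boundary (hG : ContinuousOn G {z | 0 ≤ z.re}) {k : ℝ → ℂ}
    (hk : Continuous k) (hkc : HasCompactSupport k) (v : ℝ) :
    Tendsto (fun σ : ℝ ↦ 𝓕 (fun t ↦ k t * G (σ + 2 * Real.pi * t * Complex.I)) v) (𝓝[>] 0)
      (𝓝 (𝓕 (fun t ↦ k t * G (2 * Real.pi * t * Complex.I)) v)) := by
  have G_cont : ContinuousOn (fun p : ℝ × ℝ ↦ G (p.1 + 2 * Real.pi * p.2 * Complex.I))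
      (Ici 0 ×ˢ univ) := by
    refine hG.comp (by fun_prop) fun p hp ↦ ?_
    simpa using hp.1
  obtain ⟨M, hM⟩ := (isCompact_Icc (a := (0 : ℝ)) (b := 1)).prod hkc
    |>.exists_bound_of_continuousOn (G_cont.mono (prod_mono Icc_subset_Ici_self (subset_univ _)))
  simp only [Real.fourier_real_eq]
  refine tendsto_integral_filter_of_dominated_convergence (fun t ↦ ‖k t‖ * M) ?_ ?_
    ((hk.integrable_of_hasCompactSupport hkc).norm.mul_const M) (.of_forall fun t ↦ ?_)
  · filter_upwards [self_mem_nhdsWithin] with σ hσ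
    have slice_cont : Continuous fun t : ℝ ↦ G (σ + 2 * Real.pi * t * Complex.I) :=
      hG.comp_continuous (by fun_prop) fun t ↦ by simpa using le_of_lt hσ
    exact ((Real.continuous_fourierChar.comp (by fun_prop)).smul
      (hk.mul slice_cont)).aestronglyMeasurable
  · filter_upwards [Ioo_mem_nhdsGT one_pos] with σ hσ
    refine .of_forall fun t ↦ ?_
    rw [Circle.norm_smul, norm_mul]
    by_cases ht : t ∈ tsupport k
    · exact mul_le_mul_of_nonneg_left (hM (σ, t) ⟨Ioo_subset_Icc_self hσ, ht⟩) (norm_nonneg _)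
    · simp [image_eq_zero_of_notMem_tsupport ht]
  · have approach : Tendsto (fun σ : ℝ ↦ (σ, t)) (𝓝[>] 0) (𝓝[Ici 0 ×ˢ univ] (0, t)) :=
      tendsto_nhdsWithin_iff.2 ⟨((by fun_prop : Continuous fun σ : ℝ ↦ (σ, t)).tendsto 0).mono_left
        nhdsWithin_le_nhds, eventually_mem_nhdsWithin.mono fun σ hσ ↦ ⟨mem_Ici_of_Ioi hσ, trivial⟩⟩
    have h := (G_cont (0, t) ⟨self_mem_Ici, trivial⟩).tendsto.comp approach
    simp only [Complex.ofReal_zero, zero_add] at h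
    exact (h.const_mul (k t)).const_smul _

theorem integral_mul_fourier_comp_sub (hf : Measurable f) (hfC : ∀ u, |f u| ≤ C)
    (hG : ContinuousOn G {z | 0 ≤ z.re})
    (hL : ∀ z : ℂ, 0 < z.re → ∫ u in Ioi (0 : ℝ), (f u : ℂ) * Complex.exp (-z * u) = G z)
    {k : ℝ → ℂ} (hk : Continuous k) (hkc : HasCompactSupport k) (hk_int : Integrable (𝓕 k))
    (y : ℝ) :
    ∫ u in Ioi 0, (f u : ℂ) * 𝓕 k (u - y) =
      𝓕 (fun t ↦ k t * G (2 * Real.pi * t * Complex.I)) (-y) := by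
  refine tendsto_nhds_unique ?_ (tendsto_fourier_mul_boundary hG hk hkc (-y))
  refine Tendsto.congr' (eventually_mem_nhdsWithin.mono fun σ hσ ↦
    integral_mul_exp_neg_mul_fourier_comp_sub hf hfC hL
      (hk.integrable_of_hasCompactSupport hkc) hσ y) ?_
  have shifted_int : Integrable fun u ↦ 𝓕 k (u - y) := hk_int.comp_sub_right y
  refine tendsto_integral_filter_of_dominated_convergence (fun u ↦ C * ‖𝓕 k (u - y)‖)
    (.of_forall fun σ ↦ ?_) ?_ (shifted_int.norm.const_mul C).integrableOn (.of_forall fun u ↦ ?_)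
  · exact (Measurable.aestronglyMeasurable (by fun_prop)).mul
      shifted_int.aestronglyMeasurable.restrict
  · filter_upwards [eventually_mem_nhdsWithin] with σ hσ
    filter_upwards [ae_restrict_mem measurableSet_Ioi] with u hu
    have damping_le : Real.exp (-σ * u) ≤ 1 :=
      Real.exp_le_one_iff.2 (by linarith [mul_pos (mem_Ioi.1 hσ) (mem_Ioi.1 hu)])
    rw [norm_mul, Complex.norm_real, norm_mul, Real.norm_of_nonneg (Real.exp_pos _).le]
    gcongr
    exact (mul_le_of_le_one_right (norm_nonneg _) damping_le).trans (hfC u)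
  · have : Continuous fun σ : ℝ ↦ ((f u * Real.exp (-σ * u) : ℝ) : ℂ) * 𝓕 k (u - y) := by
      fun_prop
    simpa using (this.tendsto 0).mono_left nhdsWithin_le_nhds

theorem BandLimitedDensity.integral_mul_comp_sub_tendsto_zero {K : ℝ → ℝ}
    (hK : BandLimitedDensity K) (hf : Measurable f) (hfC : ∀ u, |f u| ≤ C)
    (hG : ContinuousOn G {z | 0 ≤ z.re})
    (hL : ∀ z : ℂ, 0 < z.re → ∫ u in Ioi (0 : ℝ), (f u : ℂ) * Complex.exp (-z * u) = G z) :
    Tendsto (fun y ↦ ∫ u in Ioi (0 : ℝ), f u * K (u - y)) atTop (𝓝 0) := by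
  obtain ⟨k, hk, hkc, hkK⟩ := hK.exists_fourier_eq
  have fourier_int : Integrable (𝓕 k) :=
    hK.integrable.ofReal.congr (.of_forall fun v ↦ (hkK v).symm)
  have riemann_lebesgue := (Real.zero_at_infty_fourier
    fun t ↦ k t * G (2 * Real.pi * t * Complex.I)).comp
    (tendsto_neg_atTop_atBot.mono_right atBot_le_cocompact)
  refine tendsto_ofReal_iff.1 (Complex.ofReal_zero ▸ riemann_lebesgue.congr fun y ↦ ?_)
  rw [Function.comp_apply, ← integral_mul_fourier_comp_sub hf hfC hG hL hk hkc fourier_int,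
    ← integral_complex_ofReal]
  simp only [hkK, Complex.ofReal_mul]

end Laplace

/-- The Ingham–Karamata Tauberian theorem. -/
theorem tendsto_zero_of_laplace_continuousOn {f : ℝ → ℝ} {C : ℝ} (hf : Measurable f)
    (hfC : ∀ u, |f u| ≤ C) (hf_slow : SlowlyDecreasing f)
    {G : ℂ → ℂ} (hG : ContinuousOn G {z | 0 ≤ z.re})
    (hL : ∀ z : ℂ, 0 < z.re → ∫ u in Ioi (0 : ℝ), (f u : ℂ) * Complex.exp (-z * u) = G z) :
    Tendsto f atTop (𝓝 0) := by
  set g : ℝ → ℝ := (Ioi 0).indicator f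
  have g_eq {u : ℝ} (hu : 0 < u) : g u = f u := indicator_of_mem hu f
  have g_slow : SlowlyDecreasing g := fun ε hε ↦ by
    obtain ⟨δ, hδ, slow⟩ := hf_slow ε hε
    refine ⟨δ, hδ, ?_⟩
    filter_upwards [slow, eventually_gt_atTop 0] with u hu u_pos v hv
    rw [g_eq u_pos, g_eq (u_pos.trans_le hv.1)]
    exact hu v hv
  refine (tendsto_zero_of_bandLimited_averages (hf.indicator measurableSet_Ioi)
    (fun u ↦ (norm_indicator_le_norm_self f u).trans (hfC u)) g_slow fun K hK ↦ ?_).congr' ?_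
  · refine (hK.integral_mul_comp_sub_tendsto_zero hf hfC hG hL).congr fun y ↦ ?_
    rw [← integral_indicator measurableSet_Ioi]
    simp only [indicator_mul_left]
  · exact (eventually_gt_atTop 0).mono fun u ↦ g_eq

end Tauberian

section WienerIkehara

open Set Filter Topology MeasureTheory

variable {a : ℕ → ℝ} {C : ℝ}

/-- The summatory function `x ↦ ∑_{1 ≤ n ≤ x} a n` of an arithmetic sequence. -/
noncomputable def summatory (a : ℕ → ℝ) (x : ℝ) : ℝ := ∑ n ∈ Finset.Icc 1 ⌊x⌋₊, a n

theorem summatory_mono (ha : ∀ n, 0 ≤ a n) : Monotone (summatory a) := fun _ _ hxy ↦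
  Finset.sum_le_sum_of_subset_of_nonneg (Finset.Icc_subset_Icc_right (Nat.floor_mono hxy))
    fun n _ _ ↦ ha n

theorem summatory_nonneg (ha : ∀ n, 0 ≤ a n) (x : ℝ) : 0 ≤ summatory a x :=
  Finset.sum_nonneg fun n _ ↦ ha n

theorem summatory_exp_mul_exp_neg_mem_Icc (ha : ∀ n, 0 ≤ a n)
    (hC : ∀ x, 0 ≤ x → summatory a x ≤ C * x) (u : ℝ) :
    summatory a (Real.exp u) * Real.exp (-u) ∈ Icc 0 C := by
  refine ⟨mul_nonneg (summatory_nonneg ha _) (Real.exp_pos _).le, ?_⟩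
  rw [Real.exp_neg, ← div_eq_mul_inv, div_le_iff₀ (Real.exp_pos u)]
  exact hC _ (Real.exp_pos u).le

theorem slowlyDecreasing_summatory_exp (ha : ∀ n, 0 ≤ a n)
    (hC : ∀ x, 0 ≤ x → summatory a x ≤ C * x) (A : ℝ) :
    SlowlyDecreasing fun u ↦ summatory a (Real.exp u) * Real.exp (-u) - A := by
  intro ε hε
  have bounds := summatory_exp_mul_exp_neg_mem_Icc ha hC
  have C_nonneg : 0 ≤ C := (bounds 0).1.trans (bounds 0).2
  refine ⟨ε / (C + 1), by positivity, .of_forall fun u v hv ↦ ?_⟩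
  have window : C * (v - u) ≤ ε := calc
    C * (v - u) ≤ (C + 1) * (ε / (C + 1)) := by
      gcongr <;> linarith [hv.1, hv.2]
    _ = ε := by field_simp
  have drop : (u - v) * (summatory a (Real.exp u) * Real.exp (-u)) ≤
      summatory a (Real.exp v) * Real.exp (-v) - summatory a (Real.exp u) * Real.exp (-u) := calc
    _ ≤ (Real.exp (u - v) - 1) * (summatory a (Real.exp u) * Real.exp (-u)) :=
      mul_le_mul_of_nonneg_right (by linarith [Real.add_one_le_exp (u - v)]) (bounds u).1
    _ = summatory a (Real.exp u) * Real.exp (-v) - summatory a (Real.exp u) * Real.exp (-u) := by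
      have : Real.exp (-v) = Real.exp (u - v) * Real.exp (-u) := by rw [← Real.exp_add]; ring_nf
      rw [this]
      ring
    _ ≤ _ := by
      gcongr
      exact summatory_mono ha (Real.exp_le_exp.2 hv.1)
  have := mul_le_mul_of_nonneg_left (bounds u).2 (sub_nonneg.2 hv.1)
  linarith

theorem integral_summatory_exp (ha : ∀ n, 0 ≤ a n)
    (hC : ∀ x, 0 ≤ x → summatory a x ≤ C * x) {s : ℂ} (hs : 1 < s.re) :
    ∫ u in Ioi (0 : ℝ), ((summatory a (Real.exp u) * Real.exp (-u) : ℝ) : ℂ) *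
      Complex.exp (-(s - 1) * u) = LSeries (fun n ↦ a n) s / s := by
  have s_ne_zero : s ≠ 0 := Complex.ne_zero_of_one_lt_re hs
  have growth : (fun n : ℕ ↦ ∑ k ∈ Finset.Icc 1 n, a k) =O[atTop] fun n ↦ (n : ℝ) ^ (1 : ℝ) := by
    refine .of_bound C (.of_forall fun n ↦ ?_)
    rw [Real.rpow_one, Real.norm_natCast, Real.norm_of_nonneg (Finset.sum_nonneg fun n _ ↦ ha n)]
    simpa only [summatory, Nat.floor_natCast] using hC n n.cast_nonneg
  have exp_image : Real.exp '' Ioi 0 = Ioi 1 := by simp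
  rw [LSeries_eq_mul_integral_of_nonneg a zero_le_one hs growth ha,
    mul_div_cancel_left₀ _ s_ne_zero, ← exp_image,
    integral_image_eq_integral_abs_deriv_smul measurableSet_Ioi
    (fun x _ ↦ (Real.hasDerivAt_exp x).hasDerivWithinAt) Real.exp_injective.injOn]
  refine integral_congr_ae (.of_forall fun u ↦ ?_)
  have exponents : Complex.exp (-u) * Complex.exp (-(s - 1) * u) =
      Complex.exp u * Complex.exp (u * -(s + 1)) := by
    rw [← Complex.exp_add, ← Complex.exp_add]
    ring_nf
  simp only [summatory, Complex.real_smul, abs_of_pos (Real.exp_pos u)]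
  rw [Complex.cpow_def_of_ne_zero (by exact_mod_cast (Real.exp_pos u).ne'), ← Complex.ofReal_log
    (Real.exp_pos u).le, Real.log_exp]
  push_cast
  linear_combination (∑ k ∈ Finset.Icc 1 ⌊Real.exp u⌋₊, (a k : ℂ)) * exponents

theorem integral_summatory_exp_sub_const (ha : ∀ n, 0 ≤ a n)
    (hC : ∀ x, 0 ≤ x → summatory a x ≤ C * x) (A : ℝ) {z : ℂ} (hz : 0 < z.re) :
    ∫ u in Ioi (0 : ℝ), ((summatory a (Real.exp u) * Real.exp (-u) - A : ℝ) : ℂ) *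
      Complex.exp (-z * u) = LSeries (fun n ↦ a n) (1 + z) / (1 + z) - A / z := by
  have transform := integral_summatory_exp ha hC (s := 1 + z) (by simpa using hz)
  rw [add_sub_cancel_left] at transform
  have exp_int : IntegrableOn (fun u : ℝ ↦ Complex.exp (-z * u)) (Ioi 0) :=
    integrableOn_exp_mul_complex_Ioi (by simpa using hz) 0
  have exp_integral : ∫ u in Ioi (0 : ℝ), Complex.exp (-z * u) = 1 / z := by
    rw [integral_exp_mul_complex_Ioi (by simpa using hz)]
    simp
  have weighted_int : IntegrableOn (fun u : ℝ ↦
      ((summatory a (Real.exp u) * Real.exp (-u) : ℝ) : ℂ) * Complex.exp (-z * u)) (Ioi 0) := by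
    refine exp_int.bdd_mul (c := C) ?_ (.of_forall fun u ↦ ?_)
    · have := (summatory_mono ha).measurable
      exact Measurable.aestronglyMeasurable (by fun_prop)
    · obtain ⟨h0, hle⟩ := summatory_exp_mul_exp_neg_mem_Icc ha hC u
      rwa [Complex.norm_real, Real.norm_of_nonneg h0]
  rw [← transform, ← mul_one_div (A : ℂ), ← exp_integral, ← integral_const_mul,
    ← integral_sub weighted_int (exp_int.const_mul _)]
  simp only [Complex.ofReal_sub, sub_mul]

/-- The Wiener–Ikehara theorem, under an a priori bound of the correct order. -/
theorem summatory_div_tendsto (ha : ∀ n, 0 ≤ a n) (hC : ∀ x, 0 ≤ x → summatory a x ≤ C * x)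
    {A : ℝ} {F : ℂ → ℂ} (hF : ContinuousOn F {s | 1 ≤ s.re})
    (hFa : ∀ s : ℂ, 1 < s.re → F s = LSeries (fun n ↦ a n) s - A / (s - 1)) :
    Tendsto (fun x ↦ summatory a x / x) atTop (𝓝 A) := by
  have bounds := summatory_exp_mul_exp_neg_mem_Icc ha hC
  have meas := (summatory_mono ha).measurable
  have G_cont : ContinuousOn (fun z ↦ (F (1 + z) - A) / (1 + z)) {z | 0 ≤ z.re} := by
    refine ((hF.comp (by fun_prop) fun z hz ↦ ?_).sub continuousOn_const).div (by fun_prop)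
      fun z hz h ↦ ?_
    · simpa using hz
    · have := congrArg Complex.re h
      simp only [Complex.add_re, Complex.one_re, Complex.zero_re] at this
      linarith [mem_ofPred.1 hz]
  have error_tendsto := tendsto_zero_of_laplace_continuousOn (C := C + |A|) (by fun_prop)
    (fun u ↦ (abs_sub _ _).trans (add_le_add_left
      ((abs_of_nonneg (bounds u).1).trans_le (bounds u).2) _))
    (slowlyDecreasing_summatory_exp ha hC A) G_cont fun z hz ↦ by
      rw [integral_summatory_exp_sub_const ha hC A hz, hFa _ (by simpa using hz),
        add_sub_cancel_left]
      have : z ≠ 0 := by rintro rfl; simp at hz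
      have : 1 + z ≠ 0 := Complex.ne_zero_of_one_lt_re (by simpa using hz)
      field_simp
      ring
  have := (error_tendsto.comp Real.tendsto_log_atTop).add_const A
  rw [zero_add] at this
  refine this.congr' ((eventually_gt_atTop 0).mono fun x hx ↦ ?_)
  simp only [Function.comp_apply, sub_add_cancel]
  rw [Real.exp_neg, Real.exp_log hx, div_eq_mul_inv]

end WienerIkehara

section PrimeNumberTheorem

open Filter Topology Asymptotics ArithmeticFunction

theorem psi_div_tendsto : Tendsto (fun x ↦ Chebyshev.psi x / x) atTop (𝓝 1) := by
  have residueClass_eq (n : ℕ) : vonMangoldt.residueClass (1 : ZMod 1) n = vonMangoldt n :=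
    Set.indicator_of_mem (s := {n : ℕ | (n : ZMod 1) = 1}) (Subsingleton.elim _ _) _
  refine summatory_div_tendsto (fun _ ↦ vonMangoldt_nonneg)
    (fun x hx ↦ Chebyshev.psi_le_const_mul_self hx)
    (vonMangoldt.continuousOn_LFunctionResidueClassAux (1 : ZMod 1)) fun s hs ↦ ?_
  simpa [residueClass_eq] using
    vonMangoldt.eqOn_LFunctionResidueClassAux (isUnit_one : IsUnit (1 : ZMod 1)) hs

theorem theta_div_tendsto : Tendsto (fun x ↦ Chebyshev.theta x / x) atTop (𝓝 1) := by
  obtain ⟨C, hC⟩ := Chebyshev.psi_sub_theta_le_mul_sqrt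
  have sqrt_div : Tendsto (fun x : ℝ ↦ C * (√x)⁻¹) atTop (𝓝 0) := by
    simpa using (tendsto_inv_atTop_zero.comp Real.tendsto_sqrt_atTop).const_mul C
  have gap_tendsto : Tendsto (fun x ↦ (Chebyshev.psi x - Chebyshev.theta x) / x) atTop (𝓝 0) := by
    refine squeeze_zero' ?_ ?_ sqrt_div
    all_goals filter_upwards [eventually_gt_atTop 0] with x hx
    · exact div_nonneg (sub_nonneg.2 (Chebyshev.theta_le_psi x)) hx.le
    · rw [← Real.sqrt_div_self, ← mul_div_assoc]
      exact div_le_div_of_nonneg_right (hC x) hx.le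
  simpa [sub_div] using psi_div_tendsto.sub gap_tendsto

theorem primeCounting_mul_log_div_tendsto :
    Tendsto (fun x : ℝ ↦ (Nat.primeCounting ⌊x⌋₊ : ℝ) * Real.log x / x) atTop (𝓝 1) := by
  have := theta_div_tendsto.add
    Chebyshev.integral_theta_div_log_sq_isLittleO.tendsto_div_nhds_zero
  rw [add_zero] at this
  refine this.congr' ?_
  filter_upwards [eventually_ge_atTop 2] with x hx
  have : 0 < Real.log x := Real.log_pos (by linarith)
  rw [Chebyshev.primeCounting_eq_theta_div_log_add_integral hx]
  field_simp

end PrimeNumberTheorem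

section Trapezoids

theorem iCongruent_mul_of_sq_le {b k : ℕ} (odd : Odd b) (one_lt : 1 < b)
    (sq_le : b ^ 2 ≤ 4 * k + 1) : ICongruent (b * k) := by
  obtain ⟨r, rfl⟩ := odd
  obtain ⟨d, rfl⟩ := Nat.exists_eq_add_of_le (show r * (r + 1) ≤ k by nlinarith)
  have leg_pos : 0 < r * (r + 1) := Nat.mul_pos (by omega) (by omega)
  -- The right triangle with legs `b` and `(b² - 1) / 2` has hypotenuse `(b² + 1) / 2`.
  refine ⟨2 * (r * (r + 1)) + d, 2 * r + 1, 2 * (r * (r + 1)) + 1, d, by omega, by omega, by omega,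
    by omega, by ring, by rw [Nat.add_sub_cancel]; ring, ?_⟩
  have height_sq : (2 * r + 1) * (2 * r + 1) + 1 = (2 * (r * (r + 1)) + 1) * 2 := by ring
  refine Nat.Coprime.coprime_dvd_right (Dvd.intro _ height_sq.symm) ?_
  simp

theorem iCongruent_two_pow_mul_of_four_pow_le {a m : ℕ} (a_pos : 0 < a) (odd : Odd m)
    (pow_le : 4 ^ a ≤ m) : ICongruent (2 ^ a * m) := by
  obtain ⟨f, four_pow_eq⟩ : Even (4 ^ a) := (by decide : Even 4).pow_of_ne_zero a_pos.ne'
  obtain ⟨g, rfl⟩ := odd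
  have four_pow_pos : 0 < 4 ^ a := by positivity
  have four_pow_eq_sq : 4 ^ a = (2 ^ a) ^ 2 := by
    rw [← pow_mul, mul_comm, pow_mul]
    rfl
  -- The right triangle with legs `2 ^ (a + 1)` and `4 ^ a - 1` has hypotenuse `4 ^ a + 1`.
  refine ⟨g + f, 2 * 2 ^ a, 4 ^ a + 1, g + 1 - f, by omega, by positivity, by omega, by omega,
    ?_, ?_, ?_⟩
  · rw [show g + f + (g + 1 - f) = 2 * g + 1 by omega]
    ring
  · obtain ⟨w, hw⟩ : ∃ w, 4 ^ a = w + 1 := ⟨4 ^ a - 1, by omega⟩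
    rw [show g + f - (g + 1 - f) = w by omega, mul_pow, ← four_pow_eq_sq, hw]
    ring
  · refine Nat.Coprime.mul_left (Nat.coprime_two_left.2 ⟨f, by omega⟩) ?_
    rw [four_pow_eq_sq, pow_two]
    simp

theorem two_lt_leg_of_sq_add_sq_eq {e b c : ℕ} (e_pos : 0 < e) (b_pos : 0 < b)
    (triple : e ^ 2 + b ^ 2 = c ^ 2) : 2 < e := by
  obtain ⟨f, rfl⟩ := Nat.exists_eq_add_of_lt (show b < c by nlinarith)
  by_contra! e_le
  obtain rfl | f_pos := Nat.eq_zero_or_pos f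
  · interval_cases e <;> ring_nf at triple <;> omega
  · nlinarith

theorem four_dvd_even_leg_of_coprime {e b c : ℕ} (triple : e ^ 2 + b ^ 2 = c ^ 2)
    (coprime : b.Coprime c) (even : Even b) : 4 ∣ b := by
  have c_odd : Odd c := Nat.coprime_two_left.1 (coprime.coprime_dvd_left even.two_dvd)
  have e_odd : Odd e := by
    have : Odd (e ^ 2 + b ^ 2) := triple ▸ c_odd.pow
    exact Nat.odd_pow_iff two_ne_zero |>.1 <| (Nat.odd_add.1 this).2 <|
      even.pow_of_ne_zero two_ne_zero
  have eight_dvd : 8 ∣ b ^ 2 := by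
    have := Nat.eight_dvd_sq_sub_one_of_odd c_odd
    have := Nat.eight_dvd_sq_sub_one_of_odd e_odd
    have := Nat.pow_pos (n := 2) e_odd.pos
    omega
  obtain ⟨r, rfl⟩ := even.two_dvd
  have : 2 ∣ r ^ 2 := by rw [mul_pow] at eight_dvd; omega
  exact mul_dvd_mul_left 2 (Nat.prime_two.dvd_of_dvd_pow this)

theorem two_mul_add_one_eq_sq_of_prime_leg {e p c : ℕ} (prime : p.Prime) (e_pos : 0 < e)
    (triple : e ^ 2 + p ^ 2 = c ^ 2) : 2 * e + 1 = p ^ 2 := by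
  have := prime.pos
  obtain ⟨f, rfl⟩ := Nat.exists_eq_add_of_lt (show e < c by nlinarith)
  have factors : (f + 1) * (2 * e + f + 1) = p ^ 2 := by nlinarith
  obtain rfl | f_pos := Nat.eq_zero_or_pos f
  · simpa using factors
  · obtain ⟨h₁, h₂⟩ := (prime.mul_eq_prime_sq_iff (by omega) (by omega)).1 factors
    omega

theorem ICongruent.exists_eq_mul_of_odd {n : ℕ} (cong : ICongruent n) (odd : Odd n) :
    ∃ b k e c, n = b * k ∧ 2 < b ∧ 2 < e ∧ e ≤ 2 * k ∧ e ^ 2 + b ^ 2 = c ^ 2 := by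
  obtain ⟨a, b, c, d, -, b_pos, -, d_lt, area, triple, coprime⟩ := cong
  have b_odd : Odd b := by
    by_contra b_even
    obtain ⟨r, rfl⟩ := four_dvd_even_leg_of_coprime triple coprime (Nat.not_odd_iff_even.1 b_even)
    obtain ⟨s, rfl⟩ := odd
    have : 2 * (2 * s + 1) = 4 * ((a + d) * r) := by rw [area]; ring
    omega
  obtain ⟨k, rfl⟩ : b ∣ n :=
    (Nat.coprime_two_right.2 b_odd).dvd_of_dvd_mul_left (Dvd.intro_left _ area.symm)
  have base_sum : a + d = 2 * k := Nat.eq_of_mul_eq_mul_right b_pos (by rw [← area]; ring)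
  refine ⟨b, k, a - d, c, rfl, ?_, ?_, by omega, triple⟩
  · exact two_lt_leg_of_sq_add_sq_eq b_pos (Nat.sub_pos_of_lt d_lt) (by rw [add_comm, triple])
  · exact two_lt_leg_of_sq_add_sq_eq (Nat.sub_pos_of_lt d_lt) b_pos triple

theorem not_iCongruent_one : ¬ ICongruent 1 := fun cong ↦ by
  obtain ⟨b, k, e, c, eq_mul, two_lt_b, -⟩ := cong.exists_eq_mul_of_odd odd_one
  have := Nat.eq_one_of_mul_eq_one_right eq_mul.symm
  omega

theorem not_iCongruent_of_odd_prime {p : ℕ} (prime : p.Prime) (odd : Odd p) :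
    ¬ ICongruent p := fun cong ↦ by
  obtain ⟨b, k, e, c, rfl, two_lt_b, two_lt_e, e_le, -⟩ := cong.exists_eq_mul_of_odd odd
  obtain ⟨-, rfl⟩ | ⟨-, rfl⟩ := Nat.prime_mul_iff.1 prime <;> omega

theorem eq_and_eq_or_eq_and_eq_of_prime_mul_prime {p q b k : ℕ} (hp : p.Prime) (hq : q.Prime)
    (eq_mul : p * q = b * k) (b_ne_one : b ≠ 1) (k_ne_one : k ≠ 1) :
    b = p ∧ k = q ∨ b = q ∧ k = p := by
  have key {p q b k : ℕ} (hp : p.Prime) (hq : q.Prime) (eq_mul : p * q = b * k)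
      (k_ne_one : k ≠ 1) (p_dvd : p ∣ b) : b = p ∧ k = q := by
    obtain ⟨r, rfl⟩ := p_dvd
    obtain rfl : q = r * k := Nat.eq_of_mul_eq_mul_left hp.pos (by rw [eq_mul, mul_assoc])
    obtain ⟨-, rfl⟩ | ⟨-, rfl⟩ := Nat.prime_mul_iff.1 hq
    · contradiction
    · simp
  obtain p_dvd | p_dvd := hp.dvd_mul.1 (Dvd.intro _ eq_mul)
  · exact .inl (key hp hq eq_mul k_ne_one p_dvd)
  · exact .inr (key hp hq (by rw [eq_mul, mul_comm]) b_ne_one p_dvd).symm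

theorem not_iCongruent_mul_of_lt_sq {p q : ℕ} (hp : p.Prime) (hq : q.Prime) (p_le_q : p ≤ q)
    (lt_sq : 4 * q < p ^ 2) : ¬ ICongruent (p * q) := fun cong ↦ by
  have four_lt_p : 4 < p := by nlinarith
  have p_odd : Odd p := hp.odd_of_ne_two (by omega)
  have q_odd : Odd q := hq.odd_of_ne_two (by omega)
  obtain ⟨b, k, e, c, eq_mul, two_lt_b, two_lt_e, e_le, triple⟩ :=
    cong.exists_eq_mul_of_odd (p_odd.mul q_odd)
  have prime_sq_le (b_prime : b.Prime) : b ^ 2 ≤ 4 * k + 1 := by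
    have := two_mul_add_one_eq_sq_of_prime_leg b_prime (by omega) triple
    omega
  obtain ⟨rfl, rfl⟩ | ⟨rfl, rfl⟩ :=
    eq_and_eq_or_eq_and_eq_of_prime_mul_prime hp hq eq_mul (by omega) (by rintro rfl; omega)
  · -- Here `b² = 4k + 1`, which for odd `b` makes `k` the product of two consecutive integers.
    have sq_le := prime_sq_le hp
    obtain ⟨r, rfl⟩ := p_odd
    have : k = r * (r + 1) := by ring_nf at sq_le lt_sq ⊢; omega
    exact Nat.not_even_iff_odd.2 q_odd (this ▸ Nat.even_mul_succ_self r)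
  · nlinarith [prime_sq_le hq]

theorem prime_or_exists_of_not_iCongruent_of_odd {n : ℕ} (odd : Odd n) (n_ne_one : n ≠ 1)
    (not_cong : ¬ ICongruent n) :
    n.Prime ∨ ∃ p q, p.Prime ∧ q.Prime ∧ p ≤ q ∧ 4 * q < p ^ 2 ∧ n = p * q := by
  have minFac_prime : n.minFac.Prime := Nat.minFac_prime n_ne_one
  have minFac_odd : Odd n.minFac := odd.of_dvd_nat n.minFac_dvd
  obtain ⟨k, eq_mul⟩ := n.minFac_dvd
  have lt_sq : 4 * k + 1 < n.minFac ^ 2 := by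
    by_contra! sq_le
    exact not_cong (eq_mul ▸ iCongruent_mul_of_sq_le minFac_odd minFac_prime.one_lt sq_le)
  have minFac_le {q : ℕ} (hq : q.Prime) (q_dvd : q ∣ k) : n.minFac ≤ q :=
    n.minFac_le_of_dvd hq.two_le (q_dvd.trans (Dvd.intro_left _ eq_mul.symm))
  obtain rfl | k_ne_one := eq_or_ne k 1
  · exact .inl (by rwa [eq_mul, mul_one])
  have k_pos : 0 < k := Nat.pos_of_dvd_of_pos (Dvd.intro_left _ eq_mul.symm) odd.pos
  have k_prime : k.Prime := by
    by_contra not_prime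
    have := Nat.minFac_sq_le_self k_pos not_prime
    have := Nat.pow_le_pow_left (minFac_le (Nat.minFac_prime k_ne_one) k.minFac_dvd) 2
    omega
  exact .inr ⟨_, k, minFac_prime, k_prime, minFac_le k_prime dvd_rfl, by omega, eq_mul⟩

end Trapezoids

section ExactCount

open Finset Nat

/-- For a prime `p`, the primes `q ≥ p` such that `p * q ≤ N` and `p * q` is not i-congruent. -/
def thinCofactors (N p : ℕ) : Finset ℕ := {q ∈ primesLE (N / p) | p ≤ q ∧ 4 * q < p ^ 2}

/-- The odd composite numbers up to `N` that are not i-congruent. -/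
def thinSemiprimes (N : ℕ) : Finset ℕ :=
  ((primesLE N.sqrt).sigma (thinCofactors N)).image fun pq ↦ pq.1 * pq.2

theorem mem_thinSemiprimes {N n : ℕ} : n ∈ thinSemiprimes N ↔
    n ≤ N ∧ ∃ p q, p.Prime ∧ q.Prime ∧ p ≤ q ∧ 4 * q < p ^ 2 ∧ n = p * q := by
  simp only [thinSemiprimes, thinCofactors, mem_image, mem_sigma, mem_filter, mem_primesLE,
    Sigma.exists]
  constructor
  · rintro ⟨p, q, ⟨⟨-, hp⟩, ⟨q_le, hq⟩, p_le_q, lt_sq⟩, rfl⟩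
    exact ⟨mul_comm q p ▸ (Nat.le_div_iff_mul_le hp.pos).1 q_le, p, q, hp, hq, p_le_q, lt_sq, rfl⟩
  · rintro ⟨mul_le, p, q, hp, hq, p_le_q, lt_sq, rfl⟩
    refine ⟨p, q, ⟨⟨le_sqrt.2 ((Nat.mul_le_mul_left p p_le_q).trans mul_le), hp⟩, ⟨?_, hq⟩, p_le_q,
      lt_sq⟩, rfl⟩
    rwa [Nat.le_div_iff_mul_le hp.pos, mul_comm]

theorem card_thinSemiprimes (N : ℕ) :
    #(thinSemiprimes N) = ∑ p ∈ primesLE N.sqrt, #(thinCofactors N p) := by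
  rw [thinSemiprimes, Finset.card_image_of_injOn, card_sigma]
  rintro ⟨p, q⟩ hpq ⟨p', q'⟩ hpq' (eq_mul : p * q = p' * q')
  simp only [coe_sigma, Set.mem_sigma_iff, mem_coe, thinCofactors, mem_filter, mem_primesLE]
    at hpq hpq'
  obtain ⟨⟨-, hp⟩, ⟨-, hq⟩, p_le_q, -⟩ := hpq
  obtain ⟨⟨-, hp'⟩, ⟨-, hq'⟩, p'_le_q', -⟩ := hpq'
  obtain ⟨rfl, rfl⟩ | ⟨rfl, rfl⟩ :=
    eq_and_eq_or_eq_and_eq_of_prime_mul_prime hp hq eq_mul hp'.ne_one hq'.ne_one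
  · rfl
  · rw [p_le_q.antisymm p'_le_q']

open scoped Classical in
theorem card_odd_not_iCongruent {N : ℕ} (two_le : 2 ≤ N) :
    #{n ∈ Icc 1 N | ¬ ICongruent n ∧ Odd n} = primeCounting N + #(thinSemiprimes N) := by
  have eq_union : {n ∈ Icc 1 N | ¬ ICongruent n ∧ Odd n} =
      insert 1 ((primesLE N).erase 2) ∪ thinSemiprimes N := by
    ext n
    simp only [mem_filter, mem_Icc, mem_union, mem_insert, mem_erase, mem_primesLE,
      mem_thinSemiprimes]
    constructor
    · rintro ⟨⟨-, n_le⟩, not_cong, odd⟩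
      obtain rfl | n_ne_one := eq_or_ne n 1
      · exact .inl (.inl rfl)
      obtain prime | pq := prime_or_exists_of_not_iCongruent_of_odd odd n_ne_one not_cong
      · exact .inl (.inr ⟨by rintro rfl; contradiction, n_le, prime⟩)
      · exact .inr ⟨n_le, pq⟩
    · rintro ((rfl | ⟨n_ne_two, n_le, prime⟩) | ⟨n_le, p, q, hp, hq, p_le_q, lt_sq, rfl⟩)
      · exact ⟨⟨le_rfl, by omega⟩, not_iCongruent_one, odd_one⟩
      · have odd := prime.odd_of_ne_two n_ne_two
        exact ⟨⟨prime.one_le, n_le⟩, not_iCongruent_of_odd_prime prime odd, odd⟩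
      · have four_lt_p : 4 < p := by nlinarith
        exact ⟨⟨Nat.mul_pos hp.pos hq.pos, n_le⟩, not_iCongruent_mul_of_lt_sq hp hq p_le_q lt_sq,
          (hp.odd_of_ne_two (by omega)).mul (hq.odd_of_ne_two (by omega))⟩
  rw [eq_union, card_union_of_disjoint, card_insert_of_notMem,
    card_erase_add_one, primesLE_card_eq_primeCounting]
  · simp [mem_primesLE, two_le, prime_two]
  · simp [mem_primesLE, Nat.not_prime_one]
  · rw [disjoint_right]
    simp only [mem_thinSemiprimes, mem_insert, mem_erase, mem_primesLE]
    rintro _ ⟨-, p, q, hp, hq, -, -, rfl⟩ (eq_one | ⟨-, -, prime⟩)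
    · exact hp.ne_one (Nat.eq_one_of_mul_eq_one_right eq_one)
    · exact Nat.not_prime_mul hp.ne_one hq.ne_one prime

open scoped Classical in
theorem nonICongruentCount_eq {x : ℝ} (two_le : 2 ≤ x) :
    nonICongruentCount x = primeCounting ⌊x⌋₊ + #(thinSemiprimes ⌊x⌋₊) +
      #{n ∈ Icc 1 ⌊x⌋₊ | ¬ ICongruent n ∧ ¬ Odd n} := by
  rw [nonICongruentCount, ← card_filter_add_card_filter_not (p := Odd), filter_filter,
    filter_filter, card_odd_not_iCongruent (Nat.le_floor two_le)]

end ExactCount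

section EvenCount

open Finset Nat Filter Topology

open scoped Classical in
theorem card_even_not_iCongruent_le (N J : ℕ) :
    #{n ∈ Icc 1 N | ¬ ICongruent n ∧ ¬ Odd n} ≤ 8 ^ J + N / 2 ^ J := by
  rw [← Nat.Ioc_filter_dvd_card_eq_div, ← card_range (8 ^ J)]
  refine (card_le_card fun n hn ↦ ?_).trans (card_union_le _ _)
  simp only [mem_filter, mem_Icc, Nat.not_odd_iff_even] at hn
  obtain ⟨⟨n_pos, n_le⟩, not_cong, even⟩ := hn
  obtain ⟨a, m, m_odd, rfl⟩ := exists_eq_two_pow_mul_odd (Nat.pos_iff_ne_zero.1 n_pos)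
  have a_pos : 0 < a := Nat.pos_of_ne_zero <| by
    rintro rfl
    exact Nat.not_even_iff_odd.2 m_odd (by simpa using even)
  have m_lt : m < 4 ^ a := by
    by_contra! four_pow_le
    exact not_cong (iCongruent_two_pow_mul_of_four_pow_le a_pos m_odd four_pow_le)
  rw [mem_union, mem_range, mem_filter, mem_Ioc]
  obtain a_lt | J_le := lt_or_ge a J
  · left
    calc 2 ^ a * m < 2 ^ a * 4 ^ a := by gcongr
      _ = 8 ^ a := by rw [← mul_pow]; rfl
      _ ≤ 8 ^ J := Nat.pow_le_pow_right (by norm_num) a_lt.le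
  · exact .inr ⟨⟨n_pos, n_le⟩, (pow_dvd_pow 2 J_le).mul_right m⟩

open scoped Classical in
theorem card_even_not_iCongruent_le_rpow {x : ℝ} (one_le : 1 ≤ x) :
    (#{n ∈ Icc 1 ⌊x⌋₊ | ¬ ICongruent n ∧ ¬ Odd n} : ℝ) ≤ 17 * x ^ (3 / 4 : ℝ) := by
  set J := Nat.log 16 ⌊x⌋₊
  have div_le : ⌊x⌋₊ / 2 ^ J ≤ 16 * 8 ^ J := by
    refine Nat.div_le_of_le_mul ?_
    calc ⌊x⌋₊ ≤ 16 ^ (J + 1) := (Nat.lt_pow_succ_log_self (by norm_num) _).le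
      _ = 2 ^ J * (16 * 8 ^ J) := by
        rw [pow_succ, mul_left_comm, ← mul_pow, mul_comm]; rfl
  have sixteen_pow_le : (16 : ℝ) ^ J ≤ x :=
    le_trans (mod_cast Nat.pow_log_le_self 16 (Nat.floor_pos.2 one_le).ne')
      (Nat.floor_le (by linarith))
  calc (#{n ∈ Icc 1 ⌊x⌋₊ | ¬ ICongruent n ∧ ¬ Odd n} : ℝ) ≤ 8 ^ J + 16 * 8 ^ J :=
        mod_cast (card_even_not_iCongruent_le ⌊x⌋₊ J).trans (by gcongr)
    _ = 17 * ((16 : ℝ) ^ (3 / 4 : ℝ)) ^ J := by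
        rw [show (16 : ℝ) = 2 ^ (4 : ℝ) by norm_num, ← Real.rpow_mul two_pos.le]
        norm_num
        ring
    _ = 17 * ((16 : ℝ) ^ J) ^ (3 / 4 : ℝ) := by rw [Real.rpow_pow_comm (by norm_num)]
    _ ≤ 17 * x ^ (3 / 4 : ℝ) := by gcongr

open scoped Classical in
theorem card_even_not_iCongruent_mul_log_div_tendsto :
    Tendsto (fun x : ℝ ↦ (#{n ∈ Icc 1 ⌊x⌋₊ | ¬ ICongruent n ∧ ¬ Odd n} : ℝ) * Real.log x / x)
      atTop (𝓝 0) := by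
  have bound_tendsto := (isLittleO_log_rpow_atTop (r := 1 / 4)
    (by norm_num)).tendsto_div_nhds_zero.const_mul 17
  rw [mul_zero] at bound_tendsto
  refine squeeze_zero' ?_ ?_ bound_tendsto
  all_goals filter_upwards [eventually_ge_atTop 1] with x one_le
  all_goals have log_nonneg := Real.log_nonneg one_le
  · positivity
  · have x_pos : 0 < x := by linarith
    calc (#{n ∈ Icc 1 ⌊x⌋₊ | ¬ ICongruent n ∧ ¬ Odd n} : ℝ) * Real.log x / x
        ≤ 17 * x ^ (3 / 4 : ℝ) * Real.log x / x := by
          gcongr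
          exact card_even_not_iCongruent_le_rpow one_le
      _ = 17 * (Real.log x / x ^ (1 / 4 : ℝ)) := by
          rw [show (1 / 4 : ℝ) = 1 - 3 / 4 by norm_num, Real.rpow_sub x_pos, Real.rpow_one]
          field_simp

end EvenCount

section AbelSummation

open Set MeasureTheory

variable {g : ℝ → ℝ} {y z : ℝ}

theorem integral_eq_sub_integral_deriv_mul_id (y_le_z : y ≤ z)
    (diff : ∀ t ∈ Icc y z, DifferentiableAt ℝ g t) (deriv_cont : ContinuousOn (deriv g) (Icc y z)) :
    ∫ t in y..z, g t = g z * z - g y * y - ∫ t in y..z, deriv g t * t := by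
  rw [← uIcc_of_le y_le_z] at diff deriv_cont
  simpa using intervalIntegral.integral_mul_deriv_eq_deriv_mul (v := fun t : ℝ ↦ t)
    (fun t ht ↦ (diff t ht).hasDerivAt) (fun t _ ↦ hasDerivAt_id t)
    deriv_cont.intervalIntegrable intervalIntegrable_const

theorem sum_prime_mul_log_sub_integral_eq (y_nonneg : 0 ≤ y) (y_le_z : y ≤ z)
    (diff : ∀ t ∈ Icc y z, DifferentiableAt ℝ g t) (deriv_cont : ContinuousOn (deriv g) (Icc y z)) :
    ∑ p ∈ Finset.Ioc ⌊y⌋₊ ⌊z⌋₊ with p.Prime, g p * Real.log p - ∫ t in y..z, g t =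
      g z * (Chebyshev.theta z - z) - g y * (Chebyshev.theta y - y) -
        ∫ t in y..z, deriv g t * (Chebyshev.theta t - t) := by
  have theta_eq (t : ℝ) :
      ∑ k ∈ Finset.Icc 0 ⌊t⌋₊, (if k.Prime then Real.log k else 0) = Chebyshev.theta t := by
    rw [Chebyshev.theta_eq_sum_Icc, Finset.sum_filter]
  have abel := sum_mul_eq_sub_sub_integral_mul (fun k ↦ if k.Prime then Real.log k else 0)
    y_nonneg y_le_z diff deriv_cont.integrableOn_Icc
  simp only [theta_eq, mul_ite, mul_zero, ← intervalIntegral.integral_of_le y_le_z] at abel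
  have integral_gap : ∫ t in y..z, deriv g t * (Chebyshev.theta t - t) =
      (∫ t in y..z, deriv g t * Chebyshev.theta t) - ∫ t in y..z, deriv g t * t := by
    rw [← uIcc_of_le y_le_z] at deriv_cont
    simp only [mul_sub]
    exact intervalIntegral.integral_sub
      (Chebyshev.theta_mono.intervalIntegrable.continuousOn_mul deriv_cont)
      (deriv_cont.mul continuousOn_id).intervalIntegrable
  rw [Finset.sum_filter, abel, integral_gap,
    integral_eq_sub_integral_deriv_mul_id y_le_z diff deriv_cont]
  ring

theorem abs_integral_deriv_mul_theta_sub_id_le {ε : ℝ} (y_le_z : y ≤ z)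
    (deriv_cont : ContinuousOn (deriv g) (Icc y z)) (deriv_nonpos : ∀ t ∈ Icc y z, deriv g t ≤ 0)
    (theta_near : ∀ t ∈ Icc y z, |Chebyshev.theta t - t| ≤ ε * t) :
    |∫ t in y..z, deriv g t * (Chebyshev.theta t - t)| ≤ -ε * ∫ t in y..z, deriv g t * t := by
  rw [← intervalIntegral.integral_const_mul]
  refine intervalIntegral.norm_integral_le_of_norm_le (E := ℝ) y_le_z
    (.of_forall fun t ht ↦ ?_) ?_
  · have t_mem := Ioc_subset_Icc_self ht
    calc ‖deriv g t * (Chebyshev.theta t - t)‖ = -deriv g t * |Chebyshev.theta t - t| := by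
          rw [norm_mul, Real.norm_of_nonpos (deriv_nonpos t t_mem), Real.norm_eq_abs]
      _ ≤ -deriv g t * (ε * t) :=
          mul_le_mul_of_nonneg_left (theta_near t t_mem) (neg_nonneg.2 (deriv_nonpos t t_mem))
      _ = -ε * (deriv g t * t) := by ring
  · rw [← uIcc_of_le y_le_z] at deriv_cont
    exact (deriv_cont.mul continuousOn_id).intervalIntegrable.const_mul _

theorem abs_sum_prime_mul_log_sub_integral_le {s : Set ℝ} {ε : ℝ}
    (s_open : IsOpen s) (g_smooth : ContDiffOn ℝ 1 g s) (g_anti : AntitoneOn g s)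
    (y_nonneg : 0 ≤ y) (y_le_z : y ≤ z) (subset : Icc y z ⊆ s) (g_z_nonneg : 0 ≤ g z)
    (theta_near : ∀ t ∈ Icc y z, |Chebyshev.theta t - t| ≤ ε * t) :
    |∑ p ∈ Finset.Ioc ⌊y⌋₊ ⌊z⌋₊ with p.Prime, g p * Real.log p - ∫ t in y..z, g t| ≤
      ε * (2 * (y * g y) + ∫ t in y..z, g t) := by
  have y_mem := left_mem_Icc.2 y_le_z
  have z_mem := right_mem_Icc.2 y_le_z
  have g_y_nonneg : 0 ≤ g y := g_z_nonneg.trans (g_anti (subset y_mem) (subset z_mem) y_le_z)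
  have diff (t) (ht : t ∈ Icc y z) : DifferentiableAt ℝ g t :=
    (g_smooth.differentiableOn one_ne_zero).differentiableAt (s_open.mem_nhds (subset ht))
  have deriv_cont : ContinuousOn (deriv g) (Icc y z) :=
    (g_smooth.continuousOn_deriv_of_isOpen s_open le_rfl).mono subset
  have deriv_nonpos (t) (ht : t ∈ Icc y z) : deriv g t ≤ 0 := by
    rw [← derivWithin_of_isOpen s_open (subset ht)]
    exact g_anti.derivWithin_nonpos
  have boundary_le (t) (ht : t ∈ Icc y z) (g_nonneg : 0 ≤ g t) :
      |g t * (Chebyshev.theta t - t)| ≤ ε * (g t * t) := by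
    rw [abs_mul, abs_of_nonneg g_nonneg, mul_left_comm]
    exact mul_le_mul_of_nonneg_left (theta_near t ht) g_nonneg
  calc |∑ p ∈ Finset.Ioc ⌊y⌋₊ ⌊z⌋₊ with p.Prime, g p * Real.log p - ∫ t in y..z, g t|
      ≤ ε * (g z * z) + ε * (g y * y) + -ε * ∫ t in y..z, deriv g t * t := by
        rw [sum_prime_mul_log_sub_integral_eq y_nonneg y_le_z diff deriv_cont]
        refine (abs_sub _ _).trans (add_le_add ((abs_sub _ _).trans (add_le_add ?_ ?_)) ?_)
        · exact boundary_le z z_mem g_z_nonneg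
        · exact boundary_le y y_mem g_y_nonneg
        · exact abs_integral_deriv_mul_theta_sub_id_le y_le_z deriv_cont deriv_nonpos theta_near
    _ = ε * (2 * (y * g y) + ∫ t in y..z, g t) := by
        rw [integral_eq_sub_integral_deriv_mul_id y_le_z diff deriv_cont]
        ring

end AbelSummation

section HyperbolicPrimeSums

open Set Filter Topology Asymptotics MeasureTheory

/-- The density by which the prime number theorem weighs `∑ p, π(x / p)` near `p = t`,
up to the factor `x`. -/
noncomputable def hyperbolicDensity (x t : ℝ) : ℝ := (t * Real.log t * Real.log (x / t))⁻¹

variable {x t y z : ℝ}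

theorem log_div_pos_of_mem_Ioo (t_mem : t ∈ Ioo 1 x) : 0 < Real.log (x / t) :=
  Real.log_pos ((one_lt_div (zero_lt_one.trans t_mem.1)).2 t_mem.2)

theorem contDiffOn_hyperbolicDensity (x_pos : 0 < x) :
    ContDiffOn ℝ 1 (hyperbolicDensity x) (Ioo 1 x) := by
  intro t t_mem
  have t_ne : t ≠ 0 := (zero_lt_one.trans t_mem.1).ne'
  have log_ne : Real.log t ≠ 0 := (Real.log_pos t_mem.1).ne'
  have log_div_ne : Real.log (x / t) ≠ 0 := (log_div_pos_of_mem_Ioo t_mem).ne'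
  have div_ne : x / t ≠ 0 := by positivity
  unfold hyperbolicDensity
  refine ContDiffAt.contDiffWithinAt (ContDiffAt.inv ?_ (by positivity))
  fun_prop (disch := assumption)

theorem antitoneOn_hyperbolicDensity :
    AntitoneOn (hyperbolicDensity x) (Ioo 1 (x / Real.exp 1)) := by
  rintro s ⟨one_lt_s, s_lt⟩ t ⟨one_lt_t, t_lt⟩ s_le_t
  have s_pos : 0 < s := by linarith
  have x_pos : 0 < x := (div_pos_iff_of_pos_right (Real.exp_pos 1)).1 (s_pos.trans s_lt)
  have exp_le_div {u : ℝ} (u_pos : 0 < u) (u_lt : u < x / Real.exp 1) : Real.exp 1 ≤ x / u :=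
    (le_div_comm₀ (Real.exp_pos 1) u_pos).2 u_lt.le
  have mul_log_le : s * Real.log (x / s) ≤ t * Real.log (x / t) := by
    have := Real.log_div_self_antitoneOn (exp_le_div (by linarith) t_lt) (exp_le_div s_pos s_lt)
      (by gcongr)
    simpa only [div_div_eq_mul_div, div_le_div_iff_of_pos_right x_pos, mul_comm] using this
  have log_s_pos := Real.log_pos one_lt_s
  have log_div_s_pos : 0 < Real.log (x / s) :=
    Real.log_pos ((Real.one_lt_exp_iff.2 one_pos).trans_le (exp_le_div s_pos s_lt))
  refine inv_anti₀ (by positivity) ?_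
  rw [mul_right_comm, mul_right_comm t]
  exact mul_le_mul mul_log_le (Real.log_le_log s_pos s_le_t) log_s_pos.le
    ((by positivity : 0 ≤ s * Real.log (x / s)).trans mul_log_le)

theorem integral_hyperbolicDensity (one_lt_y : 1 < y) (y_le_z : y ≤ z) (z_lt_x : z < x) :
    ∫ t in y..z, hyperbolicDensity x t =
      (Real.log (Real.log z / Real.log (x / z)) - Real.log (Real.log y / Real.log (x / y))) /
        Real.log x := by
  have subset : uIcc y z ⊆ Ioo 1 x :=
    uIcc_of_le y_le_z ▸ Icc_subset_Ioo one_lt_y z_lt_x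
  have x_pos : 0 < x := by linarith
  have log_ne {t : ℝ} (t_mem : t ∈ Ioo 1 x) : Real.log t ≠ 0 := (Real.log_pos t_mem.1).ne'
  have antideriv (t) (t_mem : t ∈ uIcc y z) :
      HasDerivAt (fun t ↦ (Real.log (Real.log t) - Real.log (Real.log x - Real.log t)) / Real.log x)
        (hyperbolicDensity x t) t := by
    have t_ne : t ≠ 0 := (zero_lt_one.trans (subset t_mem).1).ne'
    have log_t_ne := log_ne (subset t_mem)
    have log_x_ne : Real.log x ≠ 0 := (Real.log_pos (by linarith)).ne'
    have log_sub_ne : Real.log x - Real.log t ≠ 0 := by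
      rw [← Real.log_div x_pos.ne' t_ne]
      exact (log_div_pos_of_mem_Ioo (subset t_mem)).ne'
    have log_deriv := Real.hasDerivAt_log t_ne
    refine (((log_deriv.log log_t_ne).sub
      ((log_deriv.const_sub (Real.log x)).log log_sub_ne)).div_const _).congr_deriv ?_
    rw [hyperbolicDensity, Real.log_div x_pos.ne' t_ne]
    field_simp
    ring
  have smooth := (contDiffOn_hyperbolicDensity x_pos).continuousOn.mono subset
  rw [intervalIntegral.integral_eq_sub_of_hasDerivAt antideriv smooth.intervalIntegrable, ← sub_div,
    Real.log_div (log_ne ⟨by linarith, z_lt_x⟩) (log_div_pos_of_mem_Ioo ⟨by linarith, z_lt_x⟩).ne',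
    Real.log_div (log_ne ⟨one_lt_y, by linarith⟩)
      (log_div_pos_of_mem_Ioo ⟨one_lt_y, by linarith⟩).ne',
    Real.log_div x_pos.ne' (by linarith), Real.log_div x_pos.ne' (by linarith)]

end HyperbolicPrimeSums

section HyperbolicPrimeSumAsymptotics

open Filter Topology Asymptotics

variable {y z : ℝ → ℝ} {α β : ℝ}

theorem log_div_div_log_tendsto (z_pos : ∀ᶠ x in atTop, 0 < z x)
    (log_z : Tendsto (fun x ↦ Real.log (z x) / Real.log x) atTop (𝓝 β)) :
    Tendsto (fun x ↦ Real.log (x / z x) / Real.log x) atTop (𝓝 (1 - β)) := by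
  refine (log_z.const_sub 1).congr' ?_
  filter_upwards [z_pos, eventually_gt_atTop 1] with x z_pos one_lt
  have := (Real.log_pos one_lt).ne'
  rw [Real.log_div (by positivity) z_pos.ne']
  field_simp

theorem id_div_tendsto_atTop (z_pos : ∀ᶠ x in atTop, 0 < z x)
    (log_z : Tendsto (fun x ↦ Real.log (z x) / Real.log x) atTop (𝓝 β)) (β_lt_one : β < 1) :
    Tendsto (fun x ↦ x / z x) atTop atTop := by
  have log_tendsto := (log_div_div_log_tendsto z_pos log_z).pos_mul_atTop (sub_pos.2 β_lt_one)
    Real.tendsto_log_atTop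
  refine (Real.tendsto_exp_atTop.comp log_tendsto).congr' ?_
  filter_upwards [z_pos, eventually_gt_atTop 1] with x z_pos one_lt
  rw [Function.comp_apply, div_mul_cancel₀ _ (Real.log_pos one_lt).ne',
    Real.exp_log (by positivity)]

theorem log_log_div_log_tendsto (z_pos : ∀ᶠ x in atTop, 0 < z x)
    (log_z : Tendsto (fun x ↦ Real.log (z x) / Real.log x) atTop (𝓝 β)) (β_pos : 0 < β)
    (β_lt_one : β < 1) :
    Tendsto (fun x ↦ Real.log (Real.log (z x) / Real.log (x / z x))) atTop
      (𝓝 (Real.log (β / (1 - β)))) := by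
  have one_sub_pos := sub_pos.2 β_lt_one
  refine ((log_z.div (log_div_div_log_tendsto z_pos log_z) one_sub_pos.ne').log
    (by positivity)).congr' ?_
  filter_upwards [eventually_gt_atTop 1] with x one_lt
  simp only [Pi.div_apply]
  rw [div_div_div_cancel_right₀ (Real.log_pos one_lt).ne']

theorem log_mul_mul_hyperbolicDensity_tendsto (y_tendsto : Tendsto y atTop atTop)
    (log_y : Tendsto (fun x ↦ Real.log (y x) / Real.log x) atTop (𝓝 α)) (α_pos : 0 < α)
    (α_lt_one : α < 1) :
    Tendsto (fun x ↦ Real.log x * (y x * hyperbolicDensity x (y x))) atTop (𝓝 0) := by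
  have y_pos := y_tendsto.eventually_gt_atTop 0
  have log_div := log_div_div_log_tendsto y_pos log_y
  have := ((log_y.inv₀ α_pos.ne').mul (log_div.inv₀ (sub_pos.2 α_lt_one).ne')).mul
    Real.tendsto_log_atTop.inv_tendsto_atTop
  rw [mul_zero] at this
  refine this.congr' ?_
  filter_upwards [y_pos, eventually_gt_atTop 1] with x y_pos one_lt
  have := (Real.log_pos one_lt).ne'
  simp only [hyperbolicDensity, Pi.inv_apply, inv_div, mul_inv]
  field_simp

theorem primeCounting_sub_div_log_isLittleO :
    (fun u : ℝ ↦ (Nat.primeCounting ⌊u⌋₊ : ℝ) - u / Real.log u) =o[atTop]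
      fun u ↦ u / Real.log u := by
  refine (isEquivalent_of_tendsto_one ?_).isLittleO
  refine primeCounting_mul_log_div_tendsto.congr fun u ↦ ?_
  rw [Pi.div_apply, div_div_eq_mul_div]

theorem theta_sub_self_isLittleO : (fun t ↦ Chebyshev.theta t - t) =o[atTop] id :=
  (isEquivalent_of_tendsto_one theta_div_tendsto).isLittleO

section Window

variable (y_tendsto : Tendsto y atTop atTop) (y_le_z : ∀ᶠ x in atTop, y x ≤ z x)
  (log_y : Tendsto (fun x ↦ Real.log (y x) / Real.log x) atTop (𝓝 α)) (α_pos : 0 < α)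
  (log_z : Tendsto (fun x ↦ Real.log (z x) / Real.log x) atTop (𝓝 β)) (β_lt_one : β < 1)

include y_tendsto y_le_z

include log_z β_lt_one in
theorem sum_primeCounting_sub_isLittleO :
    (fun x ↦ ∑ p ∈ Finset.Ioc ⌊y x⌋₊ ⌊z x⌋₊ with p.Prime, (Nat.primeCounting ⌊x / p⌋₊ : ℝ) -
      x * ∑ p ∈ Finset.Ioc ⌊y x⌋₊ ⌊z x⌋₊ with p.Prime, ((p : ℝ) * Real.log (x / p))⁻¹) =o[atTop]
    fun x ↦ x * ∑ p ∈ Finset.Ioc ⌊y x⌋₊ ⌊z x⌋₊ with p.Prime, ((p : ℝ) * Real.log (x / p))⁻¹ := by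
  refine isLittleO_iff.2 fun ε ε_pos ↦ ?_
  obtain ⟨T, primeCounting_near⟩ :=
    eventually_atTop.1 (isLittleO_iff.1 primeCounting_sub_div_log_isLittleO ε_pos)
  have z_pos := (tendsto_atTop_mono' _ y_le_z y_tendsto).eventually_gt_atTop 0
  filter_upwards [eventually_gt_atTop 0, z_pos,
    (id_div_tendsto_atTop z_pos log_z β_lt_one).eventually_ge_atTop (max T 1)]
    with x x_pos z_pos div_ge
  rw [Finset.mul_sum, ← Finset.sum_sub_distrib, Real.norm_eq_abs, Real.norm_eq_abs]
  refine (Finset.abs_sum_le_sum_abs _ _).trans ?_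
  refine le_trans ?_ (mul_le_mul_of_nonneg_left (le_abs_self _) ε_pos.le)
  rw [Finset.mul_sum]
  refine Finset.sum_le_sum fun p p_mem ↦ ?_
  obtain ⟨p_mem, prime⟩ := Finset.mem_filter.1 p_mem
  have p_pos : (0 : ℝ) < p := Nat.cast_pos.2 prime.pos
  have p_le_z : (p : ℝ) ≤ z x := (Nat.le_floor_iff z_pos.le).1 (Finset.mem_Ioc.1 p_mem).2
  have div_p_ge : max T 1 ≤ x / p := div_ge.trans (by gcongr)
  have log_nonneg := Real.log_nonneg ((le_max_right _ _).trans div_p_ge)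
  have near := primeCounting_near (x / p) ((le_max_left _ _).trans div_p_ge)
  rwa [Real.norm_eq_abs, Real.norm_of_nonneg (by positivity), div_div, div_eq_mul_inv] at near

include log_y log_z in
theorem le_of_log_div_log_tendsto : α ≤ β := by
  refine le_of_tendsto_of_tendsto log_y log_z ?_
  filter_upwards [y_le_z, y_tendsto.eventually_gt_atTop 0, eventually_gt_atTop 1]
    with x y_le_z y_pos one_lt
  have := Real.log_pos one_lt
  gcongr

include log_z β_lt_one in
theorem eventually_Icc_subset_Ioo :
    ∀ᶠ x in atTop, Set.Icc (y x) (z x) ⊆ Set.Ioo 1 (x / Real.exp 1) := by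
  have z_tendsto := tendsto_atTop_mono' _ y_le_z y_tendsto
  filter_upwards [y_tendsto.eventually_gt_atTop 1, z_tendsto.eventually_gt_atTop 0,
    (id_div_tendsto_atTop (z_tendsto.eventually_gt_atTop 0) log_z β_lt_one).eventually_gt_atTop
      (Real.exp 1)] with x one_lt_y z_pos exp_lt
  exact Set.Icc_subset_Ioo one_lt_y ((lt_div_comm₀ (Real.exp_pos 1) z_pos).1 exp_lt)

include log_z β_lt_one in
theorem sum_hyperbolicDensity_sub_integral_isLittleO :
    (fun x ↦ ∑ p ∈ Finset.Ioc ⌊y x⌋₊ ⌊z x⌋₊ with p.Prime, hyperbolicDensity x p * Real.log p -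
      ∫ t in y x..z x, hyperbolicDensity x t) =o[atTop]
    fun x ↦ 2 * (y x * hyperbolicDensity x (y x)) + ∫ t in y x..z x, hyperbolicDensity x t := by
  refine isLittleO_iff.2 fun ε ε_pos ↦ ?_
  obtain ⟨T, theta_near⟩ := eventually_atTop.1 (isLittleO_iff.1 theta_sub_self_isLittleO ε_pos)
  filter_upwards [y_le_z, y_tendsto.eventually_ge_atTop (max T 0), eventually_gt_atTop 0,
    eventually_Icc_subset_Ioo y_tendsto y_le_z log_z β_lt_one] with x y_le_z y_ge x_pos subset
  have y_nonneg := (le_max_right _ _).trans y_ge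
  have subset_Ioo_x : Set.Ioo 1 (x / Real.exp 1) ⊆ Set.Ioo 1 x :=
    Set.Ioo_subset_Ioo_right (div_le_self x_pos.le (Real.one_le_exp zero_le_one))
  have density_nonneg {t : ℝ} (t_mem : t ∈ Set.Icc (y x) (z x)) : 0 ≤ hyperbolicDensity x t := by
    have t_mem := subset_Ioo_x (subset t_mem)
    exact inv_nonneg.2 (mul_nonneg
      (mul_nonneg (by linarith [t_mem.1]) (Real.log_pos t_mem.1).le)
      (log_div_pos_of_mem_Ioo t_mem).le)
  refine (abs_sum_prime_mul_log_sub_integral_le (ε := ε) isOpen_Ioo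
    ((contDiffOn_hyperbolicDensity x_pos).mono subset_Ioo_x) antitoneOn_hyperbolicDensity
    y_nonneg y_le_z subset (density_nonneg (Set.right_mem_Icc.2 y_le_z)) fun t t_mem ↦ ?_).trans ?_
  · have t_nonneg := y_nonneg.trans t_mem.1
    simpa [abs_of_nonneg t_nonneg] using
      theta_near t ((le_max_left _ _).trans (y_ge.trans t_mem.1))
  · gcongr
    exact le_abs_self _

include log_y α_pos log_z β_lt_one

theorem log_mul_integral_hyperbolicDensity_tendsto :
    Tendsto (fun x ↦ Real.log x * ∫ t in y x..z x, hyperbolicDensity x t) atTop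
      (𝓝 (Real.log (β / (1 - β)) - Real.log (α / (1 - α)))) := by
  have α_le_β := le_of_log_div_log_tendsto y_tendsto y_le_z log_y log_z
  have y_pos := y_tendsto.eventually_gt_atTop 0
  have z_pos := (tendsto_atTop_mono' _ y_le_z y_tendsto).eventually_gt_atTop 0
  refine ((log_log_div_log_tendsto z_pos log_z (α_pos.trans_le α_le_β) β_lt_one).sub
    (log_log_div_log_tendsto y_pos log_y α_pos (α_le_β.trans_lt β_lt_one))).congr' ?_
  filter_upwards [y_le_z, y_tendsto.eventually_gt_atTop 1, eventually_gt_atTop 1,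
    (id_div_tendsto_atTop z_pos log_z β_lt_one).eventually_gt_atTop 1, z_pos]
    with x y_le_z one_lt_y one_lt_x div_gt z_pos
  rw [integral_hyperbolicDensity one_lt_y y_le_z ((one_lt_div z_pos).1 div_gt),
    mul_div_cancel₀ _ (Real.log_pos one_lt_x).ne']

theorem log_mul_sum_prime_inv_tendsto :
    Tendsto (fun x ↦ Real.log x *
        ∑ p ∈ Finset.Ioc ⌊y x⌋₊ ⌊z x⌋₊ with p.Prime, ((p : ℝ) * Real.log (x / p))⁻¹) atTop
      (𝓝 (Real.log (β / (1 - β)) - Real.log (α / (1 - α)))) := by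
  have α_lt_one := (le_of_log_div_log_tendsto y_tendsto y_le_z log_y log_z).trans_lt β_lt_one
  have integral_tendsto := log_mul_integral_hyperbolicDensity_tendsto y_tendsto y_le_z log_y α_pos
    log_z β_lt_one
  have scale_tendsto := ((log_mul_mul_hyperbolicDensity_tendsto y_tendsto log_y α_pos
    α_lt_one).const_mul 2).add integral_tendsto
  have error_isLittleO := (isBigO_refl Real.log atTop).mul_isLittleO
    (sum_hyperbolicDensity_sub_integral_isLittleO y_tendsto y_le_z log_z β_lt_one)
  simp only [mul_add, mul_left_comm _ (2 : ℝ)] at error_isLittleO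
  have sum_tendsto := ((isLittleO_one_iff ℝ).1
    (error_isLittleO.trans_isBigO (scale_tendsto.isBigO_one ℝ))).add integral_tendsto
  rw [zero_add] at sum_tendsto
  refine sum_tendsto.congr fun x ↦ ?_
  rw [mul_sub, sub_add_cancel]
  congr 1
  refine Finset.sum_congr rfl fun p p_mem ↦ ?_
  have log_ne := (Real.log_pos (Nat.one_lt_cast.2 (Finset.mem_filter.1 p_mem).2.one_lt)).ne'
  rw [hyperbolicDensity]
  field_simp

theorem sum_primeCounting_mul_log_div_tendsto :
    Tendsto (fun x ↦ (∑ p ∈ Finset.Ioc ⌊y x⌋₊ ⌊z x⌋₊ with p.Prime,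
        (Nat.primeCounting ⌊x / p⌋₊ : ℝ)) * Real.log x / x) atTop
      (𝓝 (Real.log (β / (1 - β)) - Real.log (α / (1 - α)))) := by
  have inv_tendsto := log_mul_sum_prime_inv_tendsto y_tendsto y_le_z log_y α_pos log_z β_lt_one
  have error_isLittleO := (isBigO_refl (fun x ↦ Real.log x / x) atTop).mul_isLittleO
    (sum_primeCounting_sub_isLittleO y_tendsto y_le_z log_z β_lt_one)
  have scale_eq : (fun x ↦ Real.log x / x * (x *
        ∑ p ∈ Finset.Ioc ⌊y x⌋₊ ⌊z x⌋₊ with p.Prime, ((p : ℝ) * Real.log (x / p))⁻¹)) =ᶠ[atTop]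
      fun x ↦ Real.log x *
        ∑ p ∈ Finset.Ioc ⌊y x⌋₊ ⌊z x⌋₊ with p.Prime, ((p : ℝ) * Real.log (x / p))⁻¹ := by
    filter_upwards [eventually_ne_atTop 0] with x x_ne
    rw [← mul_assoc, div_mul_cancel₀ _ x_ne]
  have scale_tendsto := inv_tendsto.congr' scale_eq.symm
  have sum_tendsto := ((isLittleO_one_iff ℝ).1
    (error_isLittleO.trans_isBigO (scale_tendsto.isBigO_one ℝ))).add scale_tendsto
  rw [zero_add] at sum_tendsto
  refine sum_tendsto.congr fun x ↦ ?_
  ring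

end Window

end HyperbolicPrimeSumAsymptotics

section ThinSemiprimeCount

open Finset Nat

variable {N Y p : ℕ}

theorem card_thinCofactors_le_sq (N p : ℕ) : #(thinCofactors N p) ≤ primeCounting (p ^ 2) := by
  rw [← primesLE_card_eq_primeCounting]
  refine card_le_card fun q hq ↦ ?_
  simp only [thinCofactors, mem_filter, mem_primesLE] at hq ⊢
  exact ⟨by omega, hq.1.2⟩

theorem card_thinCofactors_le (N p : ℕ) : #(thinCofactors N p) ≤ primeCounting (N / p) :=
  (card_filter_le _ _).trans_eq (primesLE_card_eq_primeCounting _)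

theorem primeCounting_div_le (four_mul_lt : 4 * N < (Y + 1) ^ 3) (Y_lt : Y < p)
    (p_le : p ≤ N.sqrt) :
    primeCounting (N / p) ≤ #(thinCofactors N p) + primeCounting N.sqrt := by
  rw [← primesLE_card_eq_primeCounting, ← primesLE_card_eq_primeCounting]
  refine (card_le_card fun q hq ↦ ?_).trans (card_union_le _ _)
  rw [mem_union, thinCofactors, mem_filter, mem_primesLE, mem_primesLE]
  obtain ⟨q_le, prime⟩ := mem_primesLE.1 hq
  obtain p_le_q | q_lt_p := le_or_gt p q
  · have q_mul_le : q * p ≤ N := (Nat.le_div_iff_mul_le (by omega)).1 q_le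
    refine .inl ⟨⟨q_le, prime⟩, p_le_q, Nat.lt_of_mul_lt_mul_right (a := p) ?_⟩
    calc 4 * q * p ≤ 4 * N := by rw [mul_assoc]; gcongr
      _ < (Y + 1) ^ 3 := four_mul_lt
      _ ≤ p ^ 2 * p := by rw [← pow_succ]; gcongr; omega
  · exact .inr ⟨q_lt_p.le.trans p_le, prime⟩

theorem card_thinSemiprimes_le (N Y : ℕ) :
    #(thinSemiprimes N) ≤ primeCounting Y * primeCounting (Y ^ 2) +
      ∑ p ∈ Ioc Y N.sqrt with p.Prime, primeCounting (N / p) := by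
  rw [card_thinSemiprimes, ← sum_filter_add_sum_filter_not _ (· ≤ Y)]
  refine Nat.add_le_add ?_ ?_
  · rw [← primesLE_card_eq_primeCounting Y, ← smul_eq_mul]
    refine (sum_le_card_nsmul _ _ (primeCounting (Y ^ 2)) fun p hp ↦ ?_).trans
      (Nat.mul_le_mul_right _ (card_le_card fun p hp ↦ ?_))
    · exact (card_thinCofactors_le_sq N p).trans
        (monotone_primeCounting (Nat.pow_le_pow_left (mem_filter.1 hp).2 2))
    · simp only [mem_filter, mem_primesLE] at hp ⊢
      exact ⟨hp.2, hp.1.2⟩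
  · refine (sum_le_sum fun p _ ↦ card_thinCofactors_le N p).trans (sum_le_sum_of_subset ?_)
    intro p hp
    simp only [mem_filter, mem_primesLE, mem_Ioc, not_le] at hp ⊢
    exact ⟨⟨hp.2, hp.1.1⟩, hp.1.2⟩

theorem sum_primeCounting_div_le (four_mul_lt : 4 * N < (Y + 1) ^ 3) :
    ∑ p ∈ Ioc Y N.sqrt with p.Prime, primeCounting (N / p) ≤
      #(thinSemiprimes N) + primeCounting N.sqrt * primeCounting N.sqrt := by
  have subset : {p ∈ Ioc Y N.sqrt | p.Prime} ⊆ primesLE N.sqrt := fun p hp ↦ by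
    simp only [mem_filter, mem_Ioc, mem_primesLE] at hp ⊢
    exact ⟨hp.1.2, hp.2⟩
  calc ∑ p ∈ Ioc Y N.sqrt with p.Prime, primeCounting (N / p)
      ≤ ∑ p ∈ Ioc Y N.sqrt with p.Prime, (#(thinCofactors N p) + primeCounting N.sqrt) :=
        sum_le_sum fun p hp ↦ by
          obtain ⟨Y_lt, p_le⟩ := mem_Ioc.1 (mem_filter.1 hp).1
          exact primeCounting_div_le four_mul_lt Y_lt p_le
    _ ≤ ∑ p ∈ primesLE N.sqrt, (#(thinCofactors N p) + primeCounting N.sqrt) :=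
        sum_le_sum_of_subset subset
    _ = #(thinSemiprimes N) + primeCounting N.sqrt * primeCounting N.sqrt := by
        rw [sum_add_distrib, card_thinSemiprimes, sum_const, primesLE_card_eq_primeCounting,
          smul_eq_mul]

end ThinSemiprimeCount

section ThinSemiprimeAsymptotics

open Finset Nat Filter Topology

theorem primeCounting_mul_primeCounting_mul_log_div_tendsto {u v : ℝ → ℝ} {α β C : ℝ}
    (u_tendsto : Tendsto u atTop atTop) (v_tendsto : Tendsto v atTop atTop)
    (log_u : Tendsto (fun x ↦ Real.log (u x) / Real.log x) atTop (𝓝 α)) (α_ne : α ≠ 0)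
    (log_v : Tendsto (fun x ↦ Real.log (v x) / Real.log x) atTop (𝓝 β)) (β_ne : β ≠ 0)
    (mul_eq : ∀ᶠ x in atTop, u x * v x = C * x) :
    Tendsto (fun x ↦ ((primeCounting ⌊u x⌋₊ * primeCounting ⌊v x⌋₊ : ℕ) : ℝ) * Real.log x / x)
      atTop (𝓝 0) := by
  have limit := ((((primeCounting_mul_log_div_tendsto.comp u_tendsto).mul
    (primeCounting_mul_log_div_tendsto.comp v_tendsto)).mul
    ((log_u.inv₀ α_ne).mul (log_v.inv₀ β_ne))).mul_const C).mul
    Real.tendsto_log_atTop.inv_tendsto_atTop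
  rw [mul_zero] at limit
  refine limit.congr' ?_
  filter_upwards [mul_eq, eventually_gt_atTop 1, u_tendsto.eventually_gt_atTop 1,
    v_tendsto.eventually_gt_atTop 1] with x mul_eq one_lt_x one_lt_u one_lt_v
  have log_x_ne := (Real.log_pos one_lt_x).ne'
  have log_u_ne := (Real.log_pos one_lt_u).ne'
  have log_v_ne := (Real.log_pos one_lt_v).ne'
  have C_eq : C = u x * v x / x := by rw [mul_eq, mul_div_cancel_right₀ _ (by positivity)]
  simp only [Function.comp_apply, Pi.inv_apply, C_eq]
  push_cast
  field_simp

/-- The size of `p` from which `p * q ≤ x` forces `4 * q < p ^ 2`, so that the latter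
condition can be dropped. -/
noncomputable def thinThreshold (x : ℝ) : ℝ := (4 * x) ^ (1 / 3 : ℝ)

theorem thinThreshold_pow_three {x : ℝ} (x_nonneg : 0 ≤ x) : thinThreshold x ^ 3 = 4 * x := by
  rw [thinThreshold, ← Real.rpow_mul_natCast (by positivity)]
  norm_num

theorem thinThreshold_tendsto : Tendsto thinThreshold atTop atTop :=
  (tendsto_rpow_atTop (by norm_num)).comp (tendsto_id.const_mul_atTop four_pos)

theorem log_thinThreshold_div_log_tendsto :
    Tendsto (fun x ↦ Real.log (thinThreshold x) / Real.log x) atTop (𝓝 (1 / 3)) := by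
  have limit := (Real.tendsto_log_atTop.inv_tendsto_atTop.const_mul (Real.log 4 / 3)).add_const
    (1 / 3)
  rw [mul_zero, zero_add] at limit
  refine limit.congr' ?_
  filter_upwards [eventually_gt_atTop 1] with x one_lt
  have log_ne := (Real.log_pos one_lt).ne'
  rw [thinThreshold, Real.log_rpow (by positivity), Real.log_mul four_ne_zero (by positivity),
    Pi.inv_apply]
  field_simp

theorem thinThreshold_le_sqrt {x : ℝ} (sixteen_le : 16 ≤ x) : thinThreshold x ≤ √x := by
  have x_nonneg : 0 ≤ x := by linarith
  refine Real.le_sqrt_of_sq_le (le_of_pow_le_pow_left₀ three_ne_zero x_nonneg ?_)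
  calc (thinThreshold x ^ 2) ^ 3 = 16 * x ^ 2 := by
        rw [← pow_mul, pow_mul', thinThreshold_pow_three x_nonneg]
        ring
    _ ≤ x * x ^ 2 := by gcongr
    _ = x ^ 3 := by ring

theorem log_sqrt_div_log_tendsto :
    Tendsto (fun x ↦ Real.log (√x) / Real.log x) atTop (𝓝 (1 / 2)) := by
  refine tendsto_const_nhds.congr' ?_
  filter_upwards [eventually_gt_atTop 1] with x one_lt
  have log_ne := (Real.log_pos one_lt).ne'
  rw [Real.log_sqrt (by positivity)]
  field_simp

theorem floor_sqrt_eq_sqrt_floor {x : ℝ} (x_nonneg : 0 ≤ x) : ⌊√x⌋₊ = ⌊x⌋₊.sqrt := by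
  refine eq_of_forall_le_iff fun m ↦ ?_
  rw [Nat.le_floor_iff (Real.sqrt_nonneg x), Real.le_sqrt (Nat.cast_nonneg m) x_nonneg,
    Nat.le_sqrt', Nat.le_floor_iff x_nonneg, Nat.cast_pow]

theorem four_mul_floor_lt {x : ℝ} (x_nonneg : 0 ≤ x) :
    4 * ⌊x⌋₊ < (⌊thinThreshold x⌋₊ + 1) ^ 3 := by
  have threshold_nonneg : 0 ≤ thinThreshold x := Real.rpow_nonneg (by positivity) _
  rify
  calc (4 : ℝ) * ⌊x⌋₊ ≤ 4 * x := by gcongr; exact Nat.floor_le x_nonneg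
    _ = thinThreshold x ^ 3 := (thinThreshold_pow_three x_nonneg).symm
    _ < (⌊thinThreshold x⌋₊ + 1) ^ 3 := by gcongr; exact Nat.lt_floor_add_one _

theorem sum_primeCounting_floor_div_mul_log_div_tendsto :
    Tendsto (fun x ↦ ((∑ p ∈ Ioc ⌊thinThreshold x⌋₊ ⌊x⌋₊.sqrt with p.Prime,
      primeCounting (⌊x⌋₊ / p) : ℕ) : ℝ) * Real.log x / x) atTop (𝓝 (Real.log 2)) := by
  have threshold_le : ∀ᶠ x in atTop, thinThreshold x ≤ √x :=
    (eventually_ge_atTop 16).mono fun _ ↦ thinThreshold_le_sqrt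
  have limit := sum_primeCounting_mul_log_div_tendsto thinThreshold_tendsto threshold_le
    log_thinThreshold_div_log_tendsto (by norm_num) log_sqrt_div_log_tendsto (by norm_num)
  have limit_eq : Real.log (1 / 2 / (1 - 1 / 2)) - Real.log (1 / 3 / (1 - 1 / 3)) = Real.log 2 := by
    rw [← Real.log_div (by norm_num) (by norm_num)]
    norm_num
  rw [limit_eq] at limit
  refine limit.congr' ?_
  filter_upwards [eventually_ge_atTop 0] with x x_nonneg
  rw [floor_sqrt_eq_sqrt_floor x_nonneg]
  push_cast
  simp only [Nat.floor_div_natCast]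

theorem primeCounting_sqrt_sq_mul_log_div_tendsto :
    Tendsto (fun x : ℝ ↦ ((primeCounting ⌊x⌋₊.sqrt * primeCounting ⌊x⌋₊.sqrt : ℕ) : ℝ) *
      Real.log x / x) atTop (𝓝 0) := by
  refine (primeCounting_mul_primeCounting_mul_log_div_tendsto (C := 1) Real.tendsto_sqrt_atTop
    Real.tendsto_sqrt_atTop log_sqrt_div_log_tendsto (by norm_num) log_sqrt_div_log_tendsto
    (by norm_num) ?_).congr' ?_
  all_goals filter_upwards [eventually_ge_atTop 0] with x x_nonneg
  · rw [Real.mul_self_sqrt x_nonneg, one_mul]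
  · rw [floor_sqrt_eq_sqrt_floor x_nonneg]

theorem primeCounting_thinThreshold_mul_log_div_tendsto :
    Tendsto (fun x : ℝ ↦ ((primeCounting ⌊thinThreshold x⌋₊ *
      primeCounting ⌊thinThreshold x ^ 2⌋₊ : ℕ) : ℝ) * Real.log x / x) atTop (𝓝 0) := by
  have log_sq : Tendsto (fun x ↦ Real.log (thinThreshold x ^ 2) / Real.log x) atTop
      (𝓝 (2 * (1 / 3))) :=
    (log_thinThreshold_div_log_tendsto.const_mul 2).congr fun x ↦ by
      rw [Real.log_pow, Nat.cast_two, mul_div_assoc]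
  refine primeCounting_mul_primeCounting_mul_log_div_tendsto (C := 4) thinThreshold_tendsto
    ((tendsto_pow_atTop two_ne_zero).comp thinThreshold_tendsto) log_thinThreshold_div_log_tendsto
    (by norm_num) log_sq (by norm_num) ?_
  filter_upwards [eventually_ge_atTop 0] with x x_nonneg
  rw [← _root_.pow_succ', thinThreshold_pow_three x_nonneg]

theorem card_thinSemiprimes_mul_log_div_tendsto :
    Tendsto (fun x : ℝ ↦ (#(thinSemiprimes ⌊x⌋₊) : ℝ) * Real.log x / x) atTop
      (𝓝 (Real.log 2)) := by
  have sum_tendsto := sum_primeCounting_floor_div_mul_log_div_tendsto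
  have lower := sum_tendsto.sub primeCounting_sqrt_sq_mul_log_div_tendsto
  have upper := primeCounting_thinThreshold_mul_log_div_tendsto.add sum_tendsto
  rw [sub_zero] at lower
  rw [zero_add] at upper
  refine tendsto_of_tendsto_of_tendsto_of_le_of_le' lower upper ?_ ?_
  all_goals filter_upwards [eventually_ge_atTop 1] with x one_le
  all_goals have log_nonneg := Real.log_nonneg one_le
  · rw [← sub_div, ← sub_mul]
    gcongr
    rw [sub_le_iff_le_add]
    exact mod_cast sum_primeCounting_div_le (four_mul_floor_lt (by positivity))
  · have floor_sq_le : ⌊thinThreshold x⌋₊ ^ 2 ≤ ⌊thinThreshold x ^ 2⌋₊ := by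
      refine Nat.le_floor ?_
      push_cast
      gcongr
      exact Nat.floor_le (Real.rpow_nonneg (by positivity) _)
    rw [← add_div, ← add_mul]
    gcongr
    exact mod_cast (card_thinSemiprimes_le _ ⌊thinThreshold x⌋₊).trans
      (by gcongr; exact monotone_primeCounting floor_sq_le)

end ThinSemiprimeAsymptotics

/-- `f(x) ~ (1 + ln 2) x / ln x` as `x → ∞`. -/
theorem nonICongruentCount_asymptotic :
    Filter.Tendsto (fun x : ℝ => (nonICongruentCount x : ℝ) * Real.log x / x)
      Filter.atTop (nhds (1 + Real.log 2)) := by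
  have limit := (primeCounting_mul_log_div_tendsto.add card_thinSemiprimes_mul_log_div_tendsto).add
    card_even_not_iCongruent_mul_log_div_tendsto
  rw [add_zero] at limit
  refine limit.congr' ?_
  filter_upwards [Filter.eventually_ge_atTop 2] with x two_le
  rw [nonICongruentCount_eq two_le, ← add_div, ← add_div, ← add_mul, ← add_mul]
  push_cast
  rfl
end

section
/- Let g(x) denote the number of ordered pairs of positive integers (a, b) with a > b, a*b ≤ 2x, and such that there exists a positive integer c with a^2 + b^2 = c^2 and gcd(b, c) = 1 (i.e. the number, counted with multiplicity, of i-congruent numbers at most x arising from the degenerate case d = 0 with a > b). Then there exists a constant C > 0 such that for all sufficiently large real x: sqrt(x)/2 - C ≤ g(x) ≤ x^(2/3)/(2 * 4^(1/3)) + C * x^(5/9). -/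
/-- The number of ordered pairs `(a, b)` of positive integers with `a > b`, `a * b ≤ 2 x`,
such that `a, b` are the legs of a Pythagorean triangle `a² + b² = c²` with `gcd b c = 1`
(i-congruent numbers `≤ x` coming from the degenerate case `d = 0`, counted with
multiplicity). -/
noncomputable def gCount (x : ℝ) : ℕ :=
  Set.ncard {p : ℕ × ℕ | 0 < p.2 ∧ p.2 < p.1 ∧ ((p.1 * p.2 : ℕ) : ℝ) ≤ 2 * x ∧
    ∃ c : ℕ, p.1 ^ 2 + p.2 ^ 2 = c ^ 2 ∧ Nat.gcd p.2 c = 1}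

/-!
The triangles counted by `gCount x` are the primitive Pythagorean triangles of area at most `x`.
With Euclid's generators `m > n` and `s = m - n` they correspond to the coprime pairs `(n, s)` with
`s` odd and area `n * s * (n + s) * (2 * n + s) ≤ x`.

For the upper bound, the area is at least `(n * s) ^ 2`, so there are at most as many triangles as
lattice points under the hyperbola `n * s = √x`, which is `O(√x * log x)`.

For the lower bound, put `t = s / n`. By the inequality of arithmetic and geometric means
`(1 + t) * (2 + t) ≤ (t + 3 / 2) ^ 2`, so the area is at most `x` as soon as
`n ^ 2 * √t * (t + 3 / 2) ≤ √x`. This region contains thin sectors `α < t ≤ β` cut off at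
`n ^ 2 = √x / (√β * (β + 3 / 2))`, and by Möbius inversion the coprime pairs with `s` odd have
density `4 / π ^ 2` in each of them. Summing over the sectors gives Riemann sums of
`2 / π ^ 2 * ∫ dt / (√t * (t + 3 / 2))` over `t > 0`, hence every constant below
`2 / (π * √(3 / 2)) = 0.519…` in front of `√x`.
-/

open Filter Finset Topology
open scoped ArithmeticFunction.Moebius ArithmeticFunction.zeta

/-! ### Generators of primitive triangles -/

/-- The odd leg `m² - n²` of the Pythagorean triangle generated by `m > n`. Here and below the
generators are recorded as `q = (n, s)` with `s = m - n`, so that no subtraction occurs. -/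
def oddLeg (q : ℕ × ℕ) : ℕ := q.2 * (2 * q.1 + q.2)

/-- The even leg `2mn` of the triangle with generators `q = (n, m - n)`. -/
def evenLeg (q : ℕ × ℕ) : ℕ := 2 * q.1 * (q.1 + q.2)

/-- The area of the triangle with generators `q = (n, m - n)`. -/
def triangleArea (q : ℕ × ℕ) : ℕ := q.1 * q.2 * (q.1 + q.2) * (2 * q.1 + q.2)

/-- The legs of the triangle with generators `q = (n, m - n)`, the longer one first as in
`gCount`. -/
def sortedLegs (q : ℕ × ℕ) : ℕ × ℕ :=
  (max (oddLeg q) (evenLeg q), min (oddLeg q) (evenLeg q))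

/-- The generators `(n, m - n)` of the primitive Pythagorean triangles of area at most `x`. -/
def primitiveGenerators (x : ℝ) : Set (ℕ × ℕ) :=
  {q | 0 < q.1 ∧ Odd q.2 ∧ q.1.Coprime q.2 ∧ (triangleArea q : ℝ) ≤ x}

lemma odd_oddLeg_iff {q : ℕ × ℕ} : Odd (oddLeg q) ↔ Odd q.2 := by
  grind [oddLeg, Nat.odd_mul, Nat.odd_add]

lemma even_evenLeg (q : ℕ × ℕ) : Even (evenLeg q) := by
  simp [evenLeg]

lemma oddLeg_ne_evenLeg {q : ℕ × ℕ} (hq : Odd q.2) : oddLeg q ≠ evenLeg q := fun h ↦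
  Nat.not_even_iff_odd.2 (odd_oddLeg_iff.2 hq) (h ▸ even_evenLeg q)

lemma oddLeg_mul_evenLeg (q : ℕ × ℕ) : oddLeg q * evenLeg q = 2 * triangleArea q := by
  simp only [oddLeg, evenLeg, triangleArea]
  ring

lemma oddLeg_sq_add_evenLeg_sq (q : ℕ × ℕ) :
    oddLeg q ^ 2 + evenLeg q ^ 2 = ((q.1 + q.2) ^ 2 + q.1 ^ 2) ^ 2 := by
  simp only [oddLeg, evenLeg]
  ring

lemma coprime_oddLeg_evenLeg_iff {q : ℕ × ℕ} (hq : Odd q.2) :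
    (oddLeg q).Coprime (evenLeg q) ↔ q.1.Coprime q.2 := by
  obtain ⟨n, s⟩ := q
  have hs : Odd s := hq
  have hsum : Odd (2 * n + s) := (even_two_mul n).add_odd hs
  have hmn : (2 * n + s).Coprime (n + s) ↔ n.Coprime s := by
    rw [two_mul, add_assoc, Nat.coprime_add_self_left, Nat.coprime_self_add_right]
  simp [oddLeg, evenLeg, Nat.coprime_mul_iff_left, Nat.coprime_mul_iff_right, hs, hsum, hmn,
    Nat.coprime_comm (m := s)]

lemma exists_sq_add_sq_eq_and_gcd_eq_one_iff {a b : ℕ} :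
    (∃ c, a ^ 2 + b ^ 2 = c ^ 2 ∧ Nat.gcd b c = 1) ↔
      a.Coprime b ∧ ∃ c, a ^ 2 + b ^ 2 = c ^ 2 := by
  have key {c : ℕ} (h : a ^ 2 + b ^ 2 = c ^ 2) : b.Coprime c ↔ a.Coprime b := by
    rw [← Nat.coprime_pow_right_iff two_pos b c, ← h, sq b, Nat.coprime_add_mul_left_right,
      Nat.coprime_pow_right_iff two_pos, Nat.coprime_comm]
  constructor
  · rintro ⟨c, h, hc⟩
    exact ⟨(key h).1 hc, c, h⟩
  · rintro ⟨hab, c, h⟩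
    exact ⟨c, h, (key h).2 hab⟩

lemma exists_generators {u v c : ℕ} (hu : Odd u) (hv : 0 < v) (huv : u.Coprime v)
    (h : u ^ 2 + v ^ 2 = c ^ 2) :
    ∃ q : ℕ × ℕ, 0 < q.1 ∧ Odd q.2 ∧ q.1.Coprime q.2 ∧ oddLeg q = u ∧ evenLeg q = v := by
  have hc : 0 < c := pos_of_ne_zero fun hc ↦ by simp [hc, hv.ne'] at h
  have hp : PythagoreanTriple (u : ℤ) v c := by
    unfold PythagoreanTriple
    exact_mod_cast (by linarith : u * u + v * v = c * c)
  obtain ⟨m, n, hu_eq, hv_eq, -, -, -, hm⟩ := hp.coprime_classification'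
    (by simpa using huv) (by exact_mod_cast Nat.odd_iff.1 hu) (by exact_mod_cast hc)
  have hn : 0 < n := by
    have : 0 < 2 * m * n := by rw [← hv_eq]; exact_mod_cast hv
    exact pos_of_mul_pos_right this (by positivity)
  have hnm : n < m := by
    have : n ^ 2 < m ^ 2 := by
      have : (0 : ℤ) < u := by exact_mod_cast hu.pos
      linarith
    exact lt_of_pow_lt_pow_left₀ 2 hm this
  lift n to ℕ using hn.le
  lift m to ℕ using hm
  norm_cast at hn hnm
  obtain ⟨s, rfl⟩ := Nat.exists_eq_add_of_lt hnm
  have hu' : oddLeg (n, s + 1) = u := by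
    zify
    simp only [oddLeg, hu_eq]
    push_cast
    ring
  have hv' : evenLeg (n, s + 1) = v := by
    zify
    simp only [evenLeg, hv_eq]
    push_cast
    ring
  have hs : Odd (s + 1) := odd_oddLeg_iff.1 (hu' ▸ hu)
  exact ⟨(n, s + 1), hn, hs, (coprime_oddLeg_evenLeg_iff hs).1 (by rwa [hu', hv']), hu', hv'⟩

lemma sortedLegs_injOn : Set.InjOn sortedLegs {q | Odd q.2} := by
  intro q hq r hr h
  simp only [sortedLegs, Prod.mk.injEq] at h
  have ⟨hodd, heven⟩ : oddLeg q = oddLeg r ∧ evenLeg q = evenLeg r := by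
    have := odd_oddLeg_iff.2 hq
    have := odd_oddLeg_iff.2 hr
    have := even_evenLeg q
    have := even_evenLeg r
    grind
  have hhyp : (q.1 + q.2) ^ 2 + q.1 ^ 2 = (r.1 + r.2) ^ 2 + r.1 ^ 2 := by
    apply Nat.pow_left_injective two_ne_zero
    simp only [← oddLeg_sq_add_evenLeg_sq, hodd, heven]
  have hfst : q.1 = r.1 := by
    apply Nat.pow_left_injective two_ne_zero
    simp only [oddLeg] at hodd ⊢
    linarith
  have hadd : q.1 + q.2 = r.1 + r.2 := by
    apply Nat.pow_left_injective two_ne_zero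
    simp only [oddLeg] at hodd ⊢
    linarith
  exact Prod.ext hfst (by omega)

lemma sortedLegs_image_primitiveGenerators (x : ℝ) :
    sortedLegs '' primitiveGenerators x =
      {p : ℕ × ℕ | 0 < p.2 ∧ p.2 < p.1 ∧ ((p.1 * p.2 : ℕ) : ℝ) ≤ 2 * x ∧
        ∃ c : ℕ, p.1 ^ 2 + p.2 ^ 2 = c ^ 2 ∧ Nat.gcd p.2 c = 1} := by
  have harea (q : ℕ × ℕ) :
      ((oddLeg q * evenLeg q : ℕ) : ℝ) ≤ 2 * x ↔ (triangleArea q : ℝ) ≤ x := by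
    rw [oddLeg_mul_evenLeg, Nat.cast_mul, Nat.cast_two, mul_le_mul_iff_right₀ two_pos]
  ext ⟨a, b⟩
  simp only [exists_sq_add_sq_eq_and_gcd_eq_one_iff]
  constructor
  · rintro ⟨q, ⟨hq₀, hq, hcop, hx⟩, hab⟩
    obtain ⟨rfl, rfl⟩ := Prod.mk.inj hab
    have hodd : 0 < oddLeg q := (odd_oddLeg_iff.2 hq).pos
    have heven : 0 < evenLeg q := by unfold evenLeg; positivity
    rw [← harea] at hx
    rw [← coprime_oddLeg_evenLeg_iff hq] at hcop
    have hsq := oddLeg_sq_add_evenLeg_sq q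
    refine ⟨lt_min hodd heven, min_lt_max.2 (oddLeg_ne_evenLeg hq), by rwa [max_mul_min], ?_⟩
    rcases le_total (oddLeg q) (evenLeg q) with h | h
    · simp only [max_eq_right h, min_eq_left h]
      exact ⟨hcop.symm, _, by rw [add_comm, hsq]⟩
    · simp only [max_eq_left h, min_eq_right h]
      exact ⟨hcop, _, hsq⟩
  · rintro ⟨hb, hba, hx, hcop, c, hc⟩
    dsimp only at hb hba hx hcop hc
    rcases Nat.even_or_odd a with ha | ha
    · have hb' : Odd b := Nat.not_even_iff_odd.1 fun hb' ↦
        Nat.not_coprime_of_dvd_of_dvd one_lt_two ha.two_dvd hb'.two_dvd hcop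
      obtain ⟨q, hq₀, hq, hq', rfl, rfl⟩ := exists_generators hb' (hb.trans hba) hcop.symm
        (by rw [add_comm, hc])
      rw [mul_comm, harea] at hx
      exact ⟨q, ⟨hq₀, hq, hq', hx⟩, by simp [sortedLegs, hba.le]⟩
    · obtain ⟨q, hq₀, hq, hq', rfl, rfl⟩ := exists_generators ha hb hcop hc
      rw [harea] at hx
      exact ⟨q, ⟨hq₀, hq, hq', hx⟩, by simp [sortedLegs, hba.le]⟩

theorem gCount_eq_ncard_primitiveGenerators (x : ℝ) :
    gCount x = (primitiveGenerators x).ncard := by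
  rw [gCount, ← sortedLegs_image_primitiveGenerators,
    (sortedLegs_injOn.mono fun _ hq ↦ hq.2.1).ncard_image]

/-! ### Points under the hyperbola -/

/-- The lattice points `(a, b)` with `a, b ≥ 1` under the hyperbola `a * b = N`. -/
def hyperbolaPoints (N : ℕ) : Finset (ℕ × ℕ) := {q ∈ Ioc 0 N ×ˢ Ioc 0 N | q.1 * q.2 ≤ N}

lemma card_hyperbolaPoints (N : ℕ) : #(hyperbolaPoints N) = ∑ n ∈ Ioc 0 N, N / n := by
  have hcard : #(hyperbolaPoints N) = ∑ q ∈ hyperbolaPoints N, ζ q.1 * ζ q.2 := by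
    rw [card_eq_sum_ones]
    refine sum_congr rfl fun q hq ↦ ?_
    simp only [hyperbolaPoints, mem_filter, mem_product, mem_Ioc] at hq
    simp [hq.1.1.1.ne', hq.1.2.1.ne']
  rw [hcard, hyperbolaPoints, ← ArithmeticFunction.sum_Ioc_mul_eq_sum_prod_filter,
    ArithmeticFunction.sum_Ioc_mul_eq_sum_sum]
  refine sum_congr rfl fun n hn ↦ ?_
  rw [ArithmeticFunction.sum_Ioc_zeta, ArithmeticFunction.zeta_apply,
    if_neg (mem_Ioc.1 hn).1.ne', one_mul]

lemma card_hyperbolaPoints_le (N : ℕ) : (#(hyperbolaPoints N) : ℝ) ≤ N * (1 + Real.log N) :=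
  calc (#(hyperbolaPoints N) : ℝ) = ∑ n ∈ Icc 1 N, ((N / n : ℕ) : ℝ) := by
        rw [card_hyperbolaPoints]; norm_cast
    _ ≤ ∑ n ∈ Icc 1 N, (N : ℝ) / n := by gcongr; exact Nat.cast_div_le
    _ = N * harmonic N := by
        rw [harmonic_eq_sum_Icc]
        push_cast
        simp only [mul_sum, div_eq_mul_inv]
    _ ≤ N * (1 + Real.log N) := by gcongr; exact harmonic_le_one_add_log N

lemma primitiveGenerators_subset_hyperbolaPoints (x : ℝ) :
    primitiveGenerators x ⊆ hyperbolaPoints ⌊√x⌋₊ := by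
  rintro ⟨n, s⟩ ⟨hn, hs, -, hx⟩
  have hs := hs.pos
  dsimp only at hn hs
  have hsq : (n * s) ^ 2 ≤ triangleArea (n, s) := by
    rw [triangleArea, mul_assoc (n * s), sq]
    gcongr <;> omega
  have hns : n * s ≤ ⌊√x⌋₊ := by
    refine Nat.le_floor (Real.le_sqrt_of_sq_le (le_trans ?_ hx))
    exact_mod_cast hsq
  simp only [hyperbolaPoints, coe_filter, mem_product, mem_Ioc]
  exact ⟨⟨⟨hn, (Nat.le_mul_of_pos_right n hs).trans hns⟩, hs,
    (Nat.le_mul_of_pos_left s hn).trans hns⟩, hns⟩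

lemma finite_primitiveGenerators (x : ℝ) : (primitiveGenerators x).Finite :=
  (finite_toSet _).subset (primitiveGenerators_subset_hyperbolaPoints x)

lemma mul_one_add_log_le_rpow {y ε : ℝ} (hy : 1 ≤ y) (hε : 0 < ε) :
    y * (1 + Real.log y) ≤ (1 + 1 / ε) * y ^ (1 + ε) := by
  have hlog : Real.log y ≤ y ^ ε / ε := Real.log_le_rpow_div (by positivity) hε
  have hone : 1 ≤ y ^ ε := Real.one_le_rpow hy hε.le
  calc y * (1 + Real.log y) ≤ y * (y ^ ε + y ^ ε / ε) := by gcongr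
    _ = (1 + 1 / ε) * y ^ (1 + ε) := by
        rw [Real.rpow_add (by positivity), Real.rpow_one]
        ring

theorem gCount_le_rpow {x : ℝ} (hx : 1 ≤ x) : (gCount x : ℝ) ≤ 10 * x ^ ((5 : ℝ) / 9) := by
  have hy : 1 ≤ √x := Real.one_le_sqrt.2 hx
  have hfloor : (⌊√x⌋₊ : ℝ) ≤ √x := Nat.floor_le (by positivity)
  have hfloor₀ : (0 : ℝ) < ⌊√x⌋₊ := by exact_mod_cast Nat.floor_pos.2 hy
  calc (gCount x : ℝ) ≤ #(hyperbolaPoints ⌊√x⌋₊) := by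
        rw [gCount_eq_ncard_primitiveGenerators, ← Set.ncard_coe_finset]
        exact_mod_cast Set.ncard_le_ncard (primitiveGenerators_subset_hyperbolaPoints x)
    _ ≤ ⌊√x⌋₊ * (1 + Real.log ⌊√x⌋₊) := card_hyperbolaPoints_le _
    _ ≤ √x * (1 + Real.log √x) := by gcongr
    _ ≤ (1 + 1 / (1 / 9)) * √x ^ ((1 : ℝ) + 1 / 9) := mul_one_add_log_le_rpow hy (by norm_num)
    _ = 10 * x ^ ((5 : ℝ) / 9) := by
        rw [Real.sqrt_eq_rpow, ← Real.rpow_mul (by positivity)]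
        norm_num

/-! ### Density of the coprime pairs -/

lemma tsum_odd_moebius_div_sq :
    ∑' d : ℕ, (if Odd d then (μ d : ℝ) / d ^ 2 else 0) = 8 / Real.pi ^ 2 := by
  let χ : DirichletCharacter ℂ 2 := 1
  have hre : 1 < (2 : ℂ).re := by norm_num
  have hχ : LSeries (fun n : ℕ ↦ χ n) 2 = Real.pi ^ 2 / 8 := by
    rw [← DirichletCharacter.LFunction_eq_LSeries χ hre]
    refine (DirichletCharacter.LFunctionTrivChar_eq_mul_riemannZeta (N := 2) (by norm_num)).trans ?_
    rw [Nat.prime_two.primeFactors, prod_singleton, riemannZeta_two]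
    norm_num [Complex.cpow_neg]
    ring
  have hμ : LSeries ((fun n : ℕ ↦ χ n) * fun n : ℕ ↦ (μ n : ℂ)) 2 =
      (∑' d : ℕ, (if Odd d then (μ d : ℝ) / d ^ 2 else 0) : ℝ) := by
    rw [LSeries, Complex.ofReal_tsum]
    refine tsum_congr fun d ↦ ?_
    rcases eq_or_ne d 0 with rfl | hd
    · simp
    · have hunit : IsUnit (d : ZMod 2) ↔ Odd d := by
        rw [ZMod.isUnit_iff_coprime, Nat.coprime_two_right]
      by_cases hodd : Odd d
      · simp [LSeries.term_of_ne_zero hd, χ, MulChar.one_apply (hunit.2 hodd), hodd]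
      · simp [LSeries.term_of_ne_zero hd, MulChar.map_nonunit χ (hunit.not.2 hodd), hodd]
  have hmul := DirichletCharacter.LSeries.mul_mu_eq_one χ hre
  rw [hχ, hμ] at hmul
  have hmul' : Real.pi ^ 2 / 8 *
      ∑' d : ℕ, (if Odd d then (μ d : ℝ) / d ^ 2 else 0) = 1 := by exact_mod_cast hmul
  rw [eq_div_iff (by positivity)]
  linarith

lemma sum_divisors_gcd_moebius (n s : ℕ) :
    ∑ d ∈ (n.gcd s).divisors, μ d = if n.Coprime s then 1 else 0 := by
  rw [← ArithmeticFunction.coe_mul_zeta_apply, ArithmeticFunction.moebius_mul_coe_zeta,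
    ArithmeticFunction.one_apply]

lemma hasSum_dvd_gcd_moebius {n s : ℕ} (hs : 0 < s) :
    HasSum (fun d : ℕ ↦ if d ∣ n.gcd s then (μ d : ℝ) else 0) (if n.Coprime s then 1 else 0) := by
  have hgcd : n.gcd s ≠ 0 := (Nat.gcd_pos_of_pos_right n hs).ne'
  have hsum : ∑ d ∈ (n.gcd s).divisors, (if d ∣ n.gcd s then (μ d : ℝ) else 0) =
      if n.Coprime s then 1 else 0 := by
    rw [sum_congr rfl fun d hd ↦ if_pos (Nat.dvd_of_mem_divisors hd)]
    exact_mod_cast sum_divisors_gcd_moebius n s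
  rw [← hsum]
  exact hasSum_sum_of_ne_finset_zero fun d hd ↦
    if_neg fun h ↦ hd (Nat.mem_divisors.2 ⟨h, hgcd⟩)

lemma card_filter_dvd_gcd {S T : Finset (ℕ × ℕ)} {d : ℕ} (hd : 0 < d)
    (hmul : ∀ q : ℕ × ℕ, (d * q.1, d * q.2) ∈ S ↔ q ∈ T) :
    #{q ∈ S | d ∣ q.1.gcd q.2} = #T := by
  refine card_nbij' (fun q ↦ (q.1 / d, q.2 / d)) (fun q ↦ (d * q.1, d * q.2)) ?_ ?_ ?_ ?_
  · rintro ⟨n, s⟩ hq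
    obtain ⟨hq, hd'⟩ := mem_filter.1 hq
    obtain ⟨⟨n, rfl⟩, ⟨s, rfl⟩⟩ := Nat.dvd_gcd_iff.1 hd'
    simpa [hd, ← hmul] using hq
  · rintro q hq
    simpa [hmul, Nat.dvd_gcd_iff] using hq
  · rintro ⟨n, s⟩ hq
    obtain ⟨⟨n, rfl⟩, ⟨s, rfl⟩⟩ := Nat.dvd_gcd_iff.1 (mem_filter.1 hq).2
    simp [hd]
  · rintro q -
    simp [hd]

lemma tendsto_comp_div_div {f : ℝ → ℝ} {L r : ℝ} (hr : 0 < r)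
    (hf : Tendsto (fun y ↦ f y / y) atTop (𝓝 L)) :
    Tendsto (fun y ↦ f (y / r) / y) atTop (𝓝 (L / r)) := by
  refine ((hf.comp (tendsto_id.atTop_div_const hr)).div_const r).congr fun y ↦ ?_
  simp only [Function.comp_apply, id_eq]
  rw [div_div, div_mul_cancel₀ _ hr.ne']

section CoprimeDensity

variable {A : ℝ → Finset (ℕ × ℕ)}

lemma hasSum_moebius_mul_card (hodd : ∀ y, ∀ q ∈ A y, Odd q.2)
    (hmul : ∀ y d, Odd d → ∀ q : ℕ × ℕ, (d * q.1, d * q.2) ∈ A y ↔ q ∈ A (y / d ^ 2)) (y : ℝ) :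
    HasSum (fun d : ℕ ↦ if Odd d then (μ d : ℝ) * #(A (y / d ^ 2)) else 0)
      #{q ∈ A y | q.1.Coprime q.2} := by
  have hswap := hasSum_sum fun q hq ↦ hasSum_dvd_gcd_moebius (n := q.1) (hodd y q hq).pos
  rw [sum_boole] at hswap
  convert hswap using 2 with d
  rw [← sum_filter, sum_const, nsmul_eq_mul, mul_comm]
  split_ifs with hd
  · rw [card_filter_dvd_gcd hd.pos (hmul y d hd)]
  · rw [filter_false_of_mem, card_empty, Nat.cast_zero, zero_mul]
    exact fun q hq h ↦ hd ((hodd y q hq).of_dvd_nat (h.trans (Nat.gcd_dvd_right _ _)))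

theorem tendsto_card_coprime_div {K L : ℝ} (hodd : ∀ y, ∀ q ∈ A y, Odd q.2)
    (hmul : ∀ y d, Odd d → ∀ q : ℕ × ℕ, (d * q.1, d * q.2) ∈ A y ↔ q ∈ A (y / d ^ 2))
    (hle : ∀ y, 0 ≤ y → (#(A y) : ℝ) ≤ K * y)
    (hlim : Tendsto (fun y ↦ (#(A y) : ℝ) / y) atTop (𝓝 L)) :
    Tendsto (fun y ↦ (#{q ∈ A y | q.1.Coprime q.2} : ℝ) / y) atTop (𝓝 (8 / Real.pi ^ 2 * L)) := by
  have hsum : Summable fun d : ℕ ↦ K * (1 / (d : ℝ) ^ 2) :=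
    (Real.summable_one_div_nat_pow.2 one_lt_two).mul_left K
  have htsum (y : ℝ) : (#{q ∈ A y | q.1.Coprime q.2} : ℝ) / y =
      ∑' d : ℕ, if Odd d then (μ d : ℝ) * #(A (y / d ^ 2)) / y else 0 := by
    rw [← (hasSum_moebius_mul_card hodd hmul y).tsum_eq, ← tsum_div_const]
    simp only [ite_div, zero_div]
  have hlim_tsum : 8 / Real.pi ^ 2 * L =
      ∑' d : ℕ, if Odd d then (μ d : ℝ) * (L / d ^ 2) else 0 := by
    rw [← tsum_odd_moebius_div_sq, ← tsum_mul_right]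
    refine tsum_congr fun d ↦ ?_
    split_ifs <;> ring
  simp only [htsum, hlim_tsum]
  refine tendsto_tsum_of_dominated_convergence hsum (fun d ↦ ?_) ?_
  · split_ifs with hd
    · have hd₀ : (0 : ℝ) < d := by exact_mod_cast hd.pos
      simp only [mul_div_assoc]
      exact (tendsto_comp_div_div (by positivity) hlim).const_mul _
    · exact tendsto_const_nhds
  · filter_upwards [eventually_gt_atTop 0] with y hy d
    split_ifs with hd
    · have hμ : |(μ d : ℝ)| ≤ 1 := by exact_mod_cast ArithmeticFunction.abs_moebius_le_one
      rw [Real.norm_eq_abs, abs_div, abs_mul, abs_of_pos hy, Nat.abs_cast, div_le_iff₀ hy]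
      calc |(μ d : ℝ)| * #(A (y / d ^ 2)) ≤ 1 * (K * (y / d ^ 2)) := by
            gcongr
            exact hle _ (by positivity)
        _ = K * (1 / d ^ 2) * y := by ring
    · have hK : 0 ≤ K := by
        have := (Nat.cast_nonneg _).trans (hle 1 zero_le_one)
        linarith
      rw [norm_zero]
      positivity

end CoprimeDensity

/-! ### Lattice points in sectors -/

lemma card_odd_Ioc_add {a b : ℕ} (hab : a ≤ b) :
    #{s ∈ Ioc a b | Odd s} + (a + 1) / 2 = (b + 1) / 2 := by
  induction b, hab using Nat.le_induction with
  | base => simp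
  | succ b hab ih =>
    rw [← insert_Ioc_right_eq_Ioc_add_one hab, filter_insert]
    split_ifs with hb
    · rw [card_insert_of_notMem (by simp)]
      grind
    · grind

lemma abs_card_odd_Ioc_floor_sub_le {u v : ℝ} (hu : 0 ≤ u) (huv : u ≤ v) :
    |(#{s ∈ Ioc ⌊u⌋₊ ⌊v⌋₊ | Odd s} : ℝ) - (v - u) / 2| ≤ 1 := by
  have hu₁ := Nat.floor_le hu
  have hu₂ := Nat.lt_floor_add_one u
  have hv₁ := Nat.floor_le (hu.trans huv)
  have hv₂ := Nat.lt_floor_add_one v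
  have hcard := card_odd_Ioc_add (Nat.floor_mono huv)
  have hlower : (⌊v⌋₊ : ℝ) ≤ 2 * #{s ∈ Ioc ⌊u⌋₊ ⌊v⌋₊ | Odd s} + ⌊u⌋₊ + 1 := by
    norm_cast
    lia
  have hupper : 2 * (#{s ∈ Ioc ⌊u⌋₊ ⌊v⌋₊ | Odd s} : ℝ) + ⌊u⌋₊ ≤ ⌊v⌋₊ + 1 := by
    norm_cast
    lia
  rw [abs_le]
  constructor <;> linarith

/-- The lattice points `(n, s)` with `s` odd in the triangle `α * n < s ≤ β * n`, `n ≤ √y`. The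
parameter `y` is proportional to the area, so that scaling the points by `d` scales `y` by
`d ^ 2`. -/
noncomputable def oddSector (α β y : ℝ) : Finset (ℕ × ℕ) :=
  (range (⌊√y⌋₊ + 1)).biUnion fun n ↦ {n} ×ˢ {s ∈ Ioc ⌊α * n⌋₊ ⌊β * n⌋₊ | Odd s}

section Sector

variable {α β : ℝ}

lemma mem_oddSector {y : ℝ} (hα : 0 ≤ α) {q : ℕ × ℕ} :
    q ∈ oddSector α β y ↔
      (q.1 : ℝ) ≤ √y ∧ α * q.1 < q.2 ∧ (q.2 : ℝ) ≤ β * q.1 ∧ Odd q.2 := by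
  obtain ⟨n, s⟩ := q
  simp only [oddSector, mem_biUnion, mem_range, mem_product, mem_singleton, mem_filter, mem_Ioc,
    Nat.lt_succ_iff, Nat.le_floor_iff (Real.sqrt_nonneg y)]
  constructor
  · rintro ⟨n, hn, rfl, ⟨hαs, hsβ⟩, hs⟩
    exact ⟨hn, (Nat.floor_lt (by positivity)).1 hαs, (Nat.le_floor_iff' hs.pos.ne').1 hsβ, hs⟩
  · rintro ⟨hn, hαs, hsβ, hs⟩
    exact ⟨n, hn, rfl, ⟨(Nat.floor_lt (by positivity)).2 hαs, Nat.le_floor hsβ⟩, hs⟩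

lemma mul_mem_oddSector_iff {y : ℝ} (hα : 0 ≤ α) {d : ℕ} (hd : Odd d) (q : ℕ × ℕ) :
    (d * q.1, d * q.2) ∈ oddSector α β y ↔ q ∈ oddSector α β (y / d ^ 2) := by
  have hd₀ : (0 : ℝ) < d := by exact_mod_cast hd.pos
  simp only [mem_oddSector hα, Nat.cast_mul, Nat.odd_mul, hd, true_and, mul_left_comm _ (d : ℝ),
    mul_lt_mul_iff_right₀ hd₀, mul_le_mul_iff_right₀ hd₀, Real.sqrt_div' y (sq_nonneg (d : ℝ)),
    Real.sqrt_sq hd₀.le, le_div_iff₀' hd₀]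

lemma card_oddSector (y : ℝ) : #(oddSector α β y) =
    ∑ n ∈ range (⌊√y⌋₊ + 1), #{s ∈ Ioc ⌊α * n⌋₊ ⌊β * n⌋₊ | Odd s} := by
  rw [oddSector, card_biUnion]
  · simp
  · intro m _ n _ hmn
    exact disjoint_product.2 (Or.inl (disjoint_singleton.2 hmn))

lemma sum_range_add_one_cast (M : ℕ) : ∑ n ∈ range (M + 1), (n : ℝ) = M * (M + 1) / 2 := by
  have := congrArg (Nat.cast (R := ℝ)) (sum_range_id_mul_two (M + 1))
  push_cast [Nat.add_sub_cancel] at this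
  linarith

lemma card_oddSector_le (hβ : 0 ≤ β) {y : ℝ} (hy : 0 ≤ y) :
    (#(oddSector α β y) : ℝ) ≤ β * y := by
  have hM : (⌊√y⌋₊ : ℝ) ≤ √y := Nat.floor_le (by positivity)
  have hM' : (⌊√y⌋₊ : ℝ) * (⌊√y⌋₊ + 1) / 2 ≤ ⌊√y⌋₊ ^ 2 := by
    have : (⌊√y⌋₊ : ℝ) ≤ ⌊√y⌋₊ ^ 2 := by exact_mod_cast Nat.le_self_pow two_ne_zero _
    linarith
  calc (#(oddSector α β y) : ℝ)
      ≤ ∑ n ∈ range (⌊√y⌋₊ + 1), β * (n : ℝ) := by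
        rw [card_oddSector, Nat.cast_sum]
        refine sum_le_sum fun n _ ↦ le_trans ?_ (Nat.floor_le (by positivity))
        exact_mod_cast (card_filter_le _ _).trans (by simp)
    _ = β * (⌊√y⌋₊ * (⌊√y⌋₊ + 1) / 2) := by rw [← mul_sum, sum_range_add_one_cast]
    _ ≤ β * ⌊√y⌋₊ ^ 2 := by gcongr
    _ ≤ β * √y ^ 2 := by gcongr
    _ = β * y := by rw [Real.sq_sqrt hy]

lemma abs_card_oddSector_sub_le (hα : 0 ≤ α) (hαβ : α ≤ β) (y : ℝ) :
    |(#(oddSector α β y) : ℝ) - (β - α) / 4 * (⌊√y⌋₊ * (⌊√y⌋₊ + 1))| ≤ ⌊√y⌋₊ + 1 := by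
  have hmain : (β - α) / 4 * (⌊√y⌋₊ * (⌊√y⌋₊ + 1)) =
      ∑ n ∈ range (⌊√y⌋₊ + 1), (β * n - α * n) / 2 := by
    rw [← sum_div, sum_sub_distrib, ← mul_sum, ← mul_sum, sum_range_add_one_cast]
    ring
  rw [hmain, card_oddSector, Nat.cast_sum, ← sum_sub_distrib]
  calc _ ≤ ∑ _ ∈ range (⌊√y⌋₊ + 1), (1 : ℝ) := by
        refine (abs_sum_le_sum_abs _ _).trans (sum_le_sum fun _ _ ↦ ?_)
        exact abs_card_odd_Ioc_floor_sub_le (by positivity) (by gcongr)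
    _ = ⌊√y⌋₊ + 1 := by simp

lemma tendsto_card_oddSector_div (hα : 0 ≤ α) (hαβ : α ≤ β) :
    Tendsto (fun y ↦ (#(oddSector α β y) : ℝ) / y) atTop (𝓝 ((β - α) / 4)) := by
  have hfloor : Tendsto (fun y ↦ (⌊√y⌋₊ : ℝ) / √y) atTop (𝓝 1) :=
    tendsto_nat_floor_div_atTop.comp Real.tendsto_sqrt_atTop
  have hinv : Tendsto (fun y ↦ (√y)⁻¹) atTop (𝓝 0) :=
    tendsto_inv_atTop_zero.comp Real.tendsto_sqrt_atTop
  have hmain : Tendsto (fun y ↦ (β - α) / 4 * (⌊√y⌋₊ * (⌊√y⌋₊ + 1)) / y) atTop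
      (𝓝 ((β - α) / 4)) := by
    have := ((hfloor.mul (hfloor.add hinv)).const_mul ((β - α) / 4))
    rw [add_zero, mul_one, mul_one] at this
    refine this.congr' ?_
    filter_upwards [eventually_ge_atTop 0] with y hy
    calc _ = (β - α) / 4 * (⌊√y⌋₊ * (⌊√y⌋₊ + 1)) / (√y * √y) := by ring
      _ = _ := by rw [Real.mul_self_sqrt hy]
  have herr : Tendsto (fun y ↦ ((⌊√y⌋₊ : ℝ) + 1) / y) atTop (𝓝 0) := by
    have := (hfloor.add hinv).mul hinv
    rw [mul_zero] at this
    refine this.congr' ?_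
    filter_upwards [eventually_ge_atTop 0] with y hy
    calc _ = ((⌊√y⌋₊ : ℝ) + 1) / (√y * √y) := by ring
      _ = _ := by rw [Real.mul_self_sqrt hy]
  have hdiff : Tendsto (fun y ↦ (#(oddSector α β y) : ℝ) / y -
      (β - α) / 4 * (⌊√y⌋₊ * (⌊√y⌋₊ + 1)) / y) atTop (𝓝 0) := by
    refine squeeze_zero_norm' ?_ herr
    filter_upwards [eventually_gt_atTop 0] with y hy
    rw [← sub_div, Real.norm_eq_abs, abs_div, abs_of_pos hy]
    gcongr
    exact abs_card_oddSector_sub_le hα hαβ y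
  simpa using hdiff.add hmain

end Sector

/-! ### A Riemann sum -/

section Arctan

/-- The primitive `∫₀ᵗ du / (√u * (u + a))`. -/
noncomputable def sqrtKernelPrimitive (a t : ℝ) : ℝ := 2 / √a * Real.arctan (√t / √a)

variable {a : ℝ}

lemma hasDerivAt_sqrtKernelPrimitive (ha : 0 < a) {t : ℝ} (ht : 0 < t) :
    HasDerivAt (sqrtKernelPrimitive a) (1 / (√t * (t + a))) t := by
  have h := ((Real.hasDerivAt_sqrt ht.ne').div_const (√a)).arctan.const_mul (2 / √a)
  refine h.congr_deriv ?_
  rw [div_pow, Real.sq_sqrt ht.le, Real.sq_sqrt ha.le]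
  have := Real.sq_sqrt ha.le
  field_simp
  rw [this, add_comm]

lemma continuous_sqrtKernelPrimitive (a : ℝ) : Continuous (sqrtKernelPrimitive a) := by
  unfold sqrtKernelPrimitive
  fun_prop

lemma sqrtKernelPrimitive_zero (a : ℝ) : sqrtKernelPrimitive a 0 = 0 := by
  simp [sqrtKernelPrimitive]

lemma tendsto_sqrtKernelPrimitive_atTop (ha : 0 < a) :
    Tendsto (sqrtKernelPrimitive a) atTop (𝓝 (Real.pi / √a)) := by
  have h : Tendsto (fun t ↦ Real.arctan (√t / √a)) atTop (𝓝 (Real.pi / 2)) :=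
    (Real.tendsto_arctan_atTop.mono_right nhdsWithin_le_nhds).comp
      (Real.tendsto_sqrt_atTop.atTop_div_const (Real.sqrt_pos.2 ha))
  rw [show Real.pi / √a = 2 / √a * (Real.pi / 2) by ring]
  exact h.const_mul (2 / √a)

lemma sqrtKernelPrimitive_add_sub_le (ha : 0 < a) {t δ : ℝ} (ht : 0 < t) (hδ : 0 < δ) :
    sqrtKernelPrimitive a (t + δ) - sqrtKernelPrimitive a t ≤ δ / (√t * (t + a)) := by
  obtain ⟨u, ⟨htu, -⟩, hu⟩ := exists_hasDerivAt_eq_slope (sqrtKernelPrimitive a) _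
    (lt_add_of_pos_right t hδ) (continuous_sqrtKernelPrimitive a).continuousOn
    fun u hu ↦ hasDerivAt_sqrtKernelPrimitive ha (ht.trans hu.1)
  rw [add_sub_cancel_left, eq_div_iff hδ.ne'] at hu
  rw [← hu, one_div_mul_eq_div]
  gcongr

lemma exists_lt_sum_sqrtKernel (ha : 0 < a) {c : ℝ} (hc : c < Real.pi / √a) :
    ∃ δ > 0, ∃ k : ℕ, c < ∑ i ∈ range k, δ / (√((i + 1) * δ) * ((i + 1) * δ + a)) := by
  obtain ⟨δ, hδ, hδc⟩ : ∃ δ > 0, c + sqrtKernelPrimitive a δ < Real.pi / √a := by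
    have hlim : Tendsto (fun δ ↦ c + sqrtKernelPrimitive a δ) (𝓝[>] 0) (𝓝 c) := by
      have := ((continuous_sqrtKernelPrimitive a).tendsto 0).const_add c
      rw [sqrtKernelPrimitive_zero, add_zero] at this
      exact this.mono_left nhdsWithin_le_nhds
    exact (eventually_mem_nhdsWithin.and (hlim.eventually_lt_const hc)).exists
  have hmul : Tendsto (fun k : ℕ ↦ ((k : ℝ) + 1) * δ) atTop atTop :=
    (tendsto_atTop_add_const_right _ 1 tendsto_natCast_atTop_atTop).atTop_mul_const hδ
  obtain ⟨k, hk⟩ := (((tendsto_sqrtKernelPrimitive_atTop ha).comp hmul).eventually_const_lt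
    hδc).exists
  refine ⟨δ, hδ, k, ?_⟩
  calc c < sqrtKernelPrimitive a ((k + 1) * δ) - sqrtKernelPrimitive a ((0 + 1) * δ) := by
        rw [zero_add, one_mul]
        exact lt_sub_iff_add_lt.2 hk
    _ = ∑ i ∈ range k, (sqrtKernelPrimitive a ((i + 1) * δ + δ) -
          sqrtKernelPrimitive a ((i + 1) * δ)) := by
        have := sum_range_sub (fun i : ℕ ↦ sqrtKernelPrimitive a ((i + 1) * δ)) k
        push_cast at this
        rw [← this]
        refine sum_congr rfl fun i _ ↦ ?_
        ring_nf
    _ ≤ _ := sum_le_sum fun i _ ↦ sqrtKernelPrimitive_add_sub_le ha (by positivity) hδ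

end Arctan

/-! ### Filling the region with sectors -/

/-- The coprime pairs in `oddSector α β y`. -/
noncomputable def coprimeSector (α β y : ℝ) : Finset (ℕ × ℕ) :=
  {q ∈ oddSector α β y | q.1.Coprime q.2}

theorem tendsto_card_coprimeSector_div {α β : ℝ} (hα : 0 ≤ α) (hαβ : α ≤ β) :
    Tendsto (fun y ↦ (#(coprimeSector α β y) : ℝ) / y) atTop
      (𝓝 (2 / Real.pi ^ 2 * (β - α))) := by
  rw [show 2 / Real.pi ^ 2 * (β - α) = 8 / Real.pi ^ 2 * ((β - α) / 4) by ring]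
  exact tendsto_card_coprime_div (fun _ _ hq ↦ ((mem_oddSector hα).1 hq).2.2.2)
    (fun _ _ hd ↦ mul_mem_oddSector_iff hα hd) (fun _ ↦ card_oddSector_le (hα.trans hαβ))
    (tendsto_card_oddSector_div hα hαβ)

lemma disjoint_coprimeSector {α β α' β' : ℝ} (hα : 0 ≤ α) (hα' : 0 ≤ α') (h : β ≤ α') (y y' : ℝ) :
    Disjoint (coprimeSector α β y) (coprimeSector α' β' y') := by
  refine disjoint_filter_filter (Finset.disjoint_left.2 fun q hq hq' ↦ ?_)
  rw [mem_oddSector hα] at hq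
  rw [mem_oddSector hα'] at hq'
  have : β * q.1 ≤ α' * q.1 := by gcongr
  linarith [hq.2.2.1, hq'.2.1]

lemma triangleArea_le_sq {β : ℝ} (hβ : 0 ≤ β) {q : ℕ × ℕ} (hq : (q.2 : ℝ) ≤ β * q.1) :
    (triangleArea q : ℝ) ≤ (q.1 ^ 2 * (√β * (β + 3 / 2))) ^ 2 := by
  obtain ⟨n, s⟩ := q
  have amgm : (1 + β) * (2 + β) ≤ (β + 3 / 2) ^ 2 := by linarith
  calc (triangleArea (n, s) : ℝ) = n * s * (n + s) * (2 * n + s) := by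
        push_cast [triangleArea]; rfl
    _ ≤ n * (β * n) * (n + β * n) * (2 * n + β * n) := by gcongr
    _ = n ^ 4 * β * ((1 + β) * (2 + β)) := by ring
    _ ≤ n ^ 4 * √β ^ 2 * (β + 3 / 2) ^ 2 := by rw [Real.sq_sqrt hβ]; gcongr
    _ = (n ^ 2 * (√β * (β + 3 / 2))) ^ 2 := by ring

lemma coprimeSector_subset_primitiveGenerators {α β : ℝ} (hα : 0 ≤ α) (hβ : 0 < β) (x : ℝ) :
    (coprimeSector α β (√x / (√β * (β + 3 / 2))) : Set (ℕ × ℕ)) ⊆ primitiveGenerators x := by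
  intro q hq
  obtain ⟨hq, hcop⟩ := mem_filter.1 hq
  obtain ⟨hn, hαs, hsβ, hs⟩ := (mem_oddSector hα).1 hq
  have hn₀ : 0 < q.1 := pos_of_ne_zero fun h ↦ by
    rw [h, Nat.cast_zero, mul_zero] at hαs hsβ
    exact hαs.not_ge hsβ
  have hκ : 0 < √β * (β + 3 / 2) := by positivity
  rw [Real.le_sqrt' (by positivity), le_div_iff₀ hκ, Real.le_sqrt' (by positivity)] at hn
  exact ⟨hn₀, hs, hcop, (triangleArea_le_sq hβ.le hsβ).trans hn⟩

lemma sum_card_coprimeSector_le_gCount {δ : ℝ} (hδ : 0 < δ) (k : ℕ) (x : ℝ) :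
    ∑ i ∈ range k, #(coprimeSector (i * δ) ((i + 1) * δ)
      (√x / (√((i + 1) * δ) * ((i + 1) * δ + 3 / 2)))) ≤ gCount x := by
  rw [gCount_eq_ncard_primitiveGenerators, ← card_biUnion, ← Set.ncard_coe_finset]
  · refine Set.ncard_le_ncard ?_ (finite_primitiveGenerators x)
    rw [coe_biUnion]
    exact Set.iUnion₂_subset fun i _ ↦
      coprimeSector_subset_primitiveGenerators (by positivity) (by positivity) x
  · have hdisj {i j : ℕ} (hij : i < j) (y y' : ℝ) :
        Disjoint (coprimeSector (i * δ) ((i + 1) * δ) y)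
          (coprimeSector (j * δ) ((j + 1) * δ) y') := by
      refine disjoint_coprimeSector (by positivity) (by positivity) ?_ y y'
      gcongr
      exact_mod_cast hij
    intro i _ j _ hij
    rcases hij.lt_or_gt with hij | hij
    · exact hdisj hij _ _
    · exact (hdisj hij _ _).symm

theorem eventually_mul_sqrt_le_gCount {c : ℝ} (hc : c < 2 / Real.pi ^ 2 * (Real.pi / √(3 / 2))) :
    ∀ᶠ x in atTop, c * √x ≤ gCount x := by
  have hπ : 0 < 2 / Real.pi ^ 2 := by positivity
  obtain ⟨δ, hδ, k, hsum⟩ := exists_lt_sum_sqrtKernel (by norm_num) ((div_lt_iff₀' hπ).2 hc)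
  rw [div_lt_iff₀' hπ, mul_sum] at hsum
  have hsector (i : ℕ) : Tendsto (fun x ↦ (#(coprimeSector (i * δ) ((i + 1) * δ)
      (√x / (√((i + 1) * δ) * ((i + 1) * δ + 3 / 2)))) : ℝ) / √x) atTop
      (𝓝 (2 / Real.pi ^ 2 * (δ / (√((i + 1) * δ) * ((i + 1) * δ + 3 / 2))))) := by
    have hκ : 0 < √((i + 1) * δ) * ((i + 1) * δ + 3 / 2) := by positivity
    generalize √((i + 1) * δ) * ((i + 1) * δ + 3 / 2) = κ at hκ ⊢
    have h := tendsto_card_coprimeSector_div (by positivity) (by linarith : i * δ ≤ (i + 1) * δ)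
    rw [show (i + 1) * δ - i * δ = δ by ring] at h
    rw [← mul_div_assoc]
    exact (tendsto_comp_div_div hκ h).comp Real.tendsto_sqrt_atTop
  filter_upwards [(tendsto_finsetSum (range k) fun i _ ↦ hsector i).eventually_const_lt hsum,
    eventually_gt_atTop 0] with x hx hx₀
  rw [← sum_div, lt_div_iff₀ (Real.sqrt_pos.2 hx₀)] at hx
  exact hx.le.trans (by exact_mod_cast sum_card_coprimeSector_le_gCount hδ k x)

theorem gCount_bounds :
    ∃ C : ℝ, 0 < C ∧ ∀ᶠ x : ℝ in Filter.atTop,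
      Real.sqrt x / 2 - C ≤ (gCount x : ℝ) ∧
      (gCount x : ℝ) ≤ x ^ ((2 : ℝ) / 3) / (2 * (4 : ℝ) ^ ((1 : ℝ) / 3)) +
        C * x ^ ((5 : ℝ) / 9) := by
  refine ⟨10, by norm_num, ?_⟩
  have hhalf : 1 / 2 < 2 / Real.pi ^ 2 * (Real.pi / √(3 / 2)) := by
    have hsqrt : √(3 / 2) < 1.25 := by rw [Real.sqrt_lt' (by norm_num)]; norm_num
    have hπ := Real.pi_lt_d2
    calc (1 / 2 : ℝ) < 2 / (3.15 * 1.25) := by norm_num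
      _ ≤ 2 / (Real.pi * √(3 / 2)) := by gcongr
      _ = 2 / Real.pi ^ 2 * (Real.pi / √(3 / 2)) := by field_simp
  filter_upwards [eventually_mul_sqrt_le_gCount hhalf, eventually_ge_atTop 1] with x hlower hx
  refine ⟨by linarith, (gCount_le_rpow hx).trans (le_add_of_nonneg_left ?_)⟩
  positivity
end
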